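/- arXiv:0710.3991 — 4 statements merged into one kernel-verified Lean document; each statement's English description precedes it below -/
import Mathlib

section
/- Let F ⊂ Sym²(ℝⁿ) be a Dirichlet set with Dirichlet dual F̃, and let K ⊂ ℝⁿ be compact. Suppose u : K → [−∞, ∞) is upper semicontinuous with its restriction to Int K of type F, and v : K → (−∞, ∞] is lower semicontinuous with the restriction of −v to Int K of type F̃. If u ≤ v on ∂K, then u ≤ v on all of K. -/
open Set Metric Filter MeasureTheory Asymptotics
open scoped Topology BigOperators RealInnerProductSpace

noncomputable section

abbrev Euc (n : ℕ) : Type := EuclideanSpace ℝ (Fin n)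

abbrev SymMat (n : ℕ) : Type := ↥(selfAdjoint (Matrix (Fin n) (Fin n) ℝ))

/-- `u` is subaffine on `X`. -/
def SubaffineOn {n : ℕ} (X : Set (Euc n)) (u : Euc n → EReal) : Prop :=
  ∀ K : Set (Euc n), IsCompact K → K ⊆ X →
    ∀ a : Euc n →ᵃ[ℝ] ℝ,
      (∀ x ∈ frontier K, u x ≤ (a x : EReal)) → ∀ x ∈ K, u x ≤ (a x : EReal)

/-- The Hessian matrix of `u` at `x`. -/
def hessMat {n : ℕ} (u : Euc n → ℝ) (x : Euc n) : Matrix (Fin n) (Fin n) ℝ :=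
  fun i j => iteratedFDeriv ℝ 2 u x ![EuclideanSpace.single i 1, EuclideanSpace.single j 1]

structure IsDirichletSet {n : ℕ} (F : Set (SymMat n)) : Prop where
  nonempty : F.Nonempty
  ne_univ : F ≠ Set.univ
  isClosed : IsClosed F
  add_psd : ∀ A ∈ F, ∀ P : SymMat n, (P : Matrix (Fin n) (Fin n) ℝ).PosSemidef → A + P ∈ F

/-- The Dirichlet dual `F̃ = −(∼ Int F)`. -/
def dirDual {n : ℕ} (F : Set (SymMat n)) : Set (SymMat n) := {A | -A ∉ interior F}

/-- A C² function `v` on `X` is of type `F`. -/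
def IsTypeFC2 {n : ℕ} (F : Set (SymMat n)) (X : Set (Euc n)) (v : Euc n → ℝ) : Prop :=
  ContDiffOn ℝ 2 v X ∧ ∀ x ∈ X, ∃ A ∈ F, (A : Matrix (Fin n) (Fin n) ℝ) = hessMat v x

/-- An u.s.c. function `u` is of type `F` on `X`. -/
def IsTypeF {n : ℕ} (F : Set (SymMat n)) (X : Set (Euc n)) (u : Euc n → EReal) : Prop :=
  ∀ v : Euc n → ℝ, IsTypeFC2 (dirDual F) X v → SubaffineOn X (fun x => u x + (v x : EReal))

/-- The ray set `F⃗` of `F`. -/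
def raySet {n : ℕ} (F : Set (SymMat n)) : Set (SymMat n) :=
  closure {A : SymMat n | ∃ t₀ : ℝ, ∀ t : ℝ, t₀ ≤ t → t • A ∈ F}

/-- The bilinear form `⟨A v, w⟩` of a matrix. -/
def bilin {n : ℕ} (A : Matrix (Fin n) (Fin n) ℝ) (v w : Euc n) : ℝ :=
  ∑ i, ∑ j, A i j * v i * w j

/-- `A` is not negative definite. -/
def NotNegDef {n : ℕ} (A : SymMat n) : Prop :=
  ¬ (-(A : Matrix (Fin n) (Fin n) ℝ)).PosDef

def IsLocalDefiningFn {n : ℕ} (Ω U : Set (Euc n)) (ρ : Euc n → ℝ) : Prop :=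
  IsOpen U ∧ ContDiffOn ℝ (⊤ : ℕ∞) ρ U ∧ Ω ∩ U = {y ∈ U | ρ y < 0} ∧ ∀ y ∈ U, fderiv ℝ ρ y ≠ 0

def HasSmoothBoundary {n : ℕ} (Ω : Set (Euc n)) : Prop :=
  ∀ x ∈ frontier Ω, ∃ U ρ, x ∈ U ∧ IsLocalDefiningFn Ω U ρ

/-- `∂Ω` is strictly `G`-convex at `x`. -/
def StrictlyConvexAt {n : ℕ} (G : Set (SymMat n)) (Ω : Set (Euc n)) (x : Euc n) : Prop :=
  ∃ U ρ, x ∈ U ∧ IsLocalDefiningFn Ω U ρ ∧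
    ∃ B ∈ interior G, ∀ v w : Euc n, fderiv ℝ ρ x v = 0 → fderiv ℝ ρ x w = 0 →
      bilin (hessMat ρ x) v w = bilin (B : Matrix (Fin n) (Fin n) ℝ) v w

def symOne (n : ℕ) : SymMat n := ⟨1, selfAdjoint.mem_iff.mpr (IsSelfAdjoint.one _)⟩

/-- `u` is twice differentiable at `x` with Hessian `A`. -/
def TwiceDiffWithHessAt {n : ℕ} (u : Euc n → ℝ) (x : Euc n)
    (A : Matrix (Fin n) (Fin n) ℝ) : Prop :=
  ∃ p : Euc n, (fun h : Euc n => u (x + h) - u x - ⟪p, h⟫ - 1/2 * bilin A h h)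
      =o[𝓝 (0 : Euc n)] fun h => ‖h‖ ^ 2

/-! ### Real-variable core -/

section Core

variable {n : ℕ}

structure IsSup (K : Set (Euc n)) (l : ℝ) (a f : Euc n → ℝ) : Prop where
  le : ∀ x, ∀ y ∈ K, a y + l * ⟪x, y⟫ ≤ f x
  ex : ∀ x, ∃ y ∈ K, f x = a y + l * ⟪x, y⟫

theorem IsSup.exists {K : Set (Euc n)} (hK : IsCompact K) (hne : K.Nonempty) (l : ℝ)
    {a : Euc n → ℝ} (ha : UpperSemicontinuousOn a K) : ∃ f, IsSup K l a f := by
  have h : ∀ x : Euc n, ∃ y ∈ K, IsMaxOn (fun y => a y + l * ⟪x, y⟫) K y := by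
    intro x
    apply UpperSemicontinuousOn.exists_isMaxOn hne hK
    apply ha.add
    apply ContinuousOn.upperSemicontinuousOn
    fun_prop
  choose y hy hmax using h
  exact ⟨fun x => a (y x) + l * ⟪x, y x⟫, ⟨fun x z hz => hmax x hz, fun x => ⟨y x, hy x, rfl⟩⟩⟩

theorem IsSup.mid {K : Set (Euc n)} {l : ℝ} {a f : Euc n → ℝ} (h : IsSup K l a f)
    (x k : Euc n) : 2 * f x ≤ f (x + k) + f (x - k) := by
  obtain ⟨y, hy, e⟩ := h.ex x
  have h1 := h.le (x + k) y hy
  have h2 := h.le (x - k) y hy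
  rw [inner_add_left] at h1
  rw [inner_sub_left] at h2
  linarith

theorem IsSup.lip {K : Set (Euc n)} {l : ℝ} {a f : Euc n → ℝ} (h : IsSup K l a f)
    {R : ℝ} (hR : ∀ y ∈ K, ‖y‖ ≤ R) (hl : 0 ≤ l)
    (x x' : Euc n) : f x ≤ f x' + l * R * ‖x - x'‖ := by
  obtain ⟨y, hy, e⟩ := h.ex x
  have h1 := h.le x' y hy
  have h2 : ⟪x - x', y⟫ ≤ ‖x - x'‖ * ‖y‖ := real_inner_le_norm _ _
  have h3 : ‖x - x'‖ * ‖y‖ ≤ ‖x - x'‖ * R := by gcongr; exact hR y hy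
  rw [inner_sub_left] at h2
  have h4 := mul_le_mul_of_nonneg_left (h2.trans h3) hl
  nlinarith

theorem continuous_of_lip {f : Euc n → ℝ} {L : ℝ}
    (h : ∀ x x', f x ≤ f x' + L * ‖x - x'‖) : Continuous f := by
  have : LipschitzWith (Real.toNNReal L) f := by
    apply LipschitzWith.of_dist_le_mul
    intro x y
    have h1 := h x y
    have h2 := h y x
    rw [norm_sub_rev] at h2
    have h3 : L * ‖x - y‖ ≤ (Real.toNNReal L) * ‖x - y‖ := by
      gcongr; exact Real.le_coe_toNNReal L
    rw [Real.dist_eq, dist_eq_norm, abs_le]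
    constructor <;> linarith
  exact this.continuous

theorem exists_min {φ : Euc n → ℝ} (hc : Continuous φ) {c L m : ℝ} (hm : 0 < m)
    (h : ∀ x, c - L * ‖x‖ + m * ‖x‖ ^ 2 ≤ φ x) : ∃ x, ∀ y, φ x ≤ φ y := by
  apply hc.exists_forall_le' 0
  have := (tendsto_norm_cocompact_atTop (E := Euc n)).eventually_ge_atTop
    (max 1 ((L + |φ 0 - c|) / m))
  filter_upwards [this] with x hx
  have h1 : 1 ≤ ‖x‖ := (le_max_left _ _).trans hx
  have h2 : (L + |φ 0 - c|) / m ≤ ‖x‖ := (le_max_right _ _).trans hx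
  rw [div_le_iff₀ hm] at h2
  have h3 := h x
  have h4 := le_abs_self (φ 0 - c)
  have h5 := abs_nonneg (φ 0 - c)
  have h6 : (L + |φ 0 - c|) * ‖x‖ ≤ (‖x‖ * m) * ‖x‖ := by gcongr
  nlinarith

theorem two_sided {S : Euc n → ℝ} {x q : Euc n} {m : ℝ}
    (hmid : ∀ k, 2 * S x ≤ S (x + k) + S (x - k))
    (hup : ∀ k, S (x + k) ≤ S x + ⟪q, k⟫ + m * ‖k‖ ^ 2) (k : Euc n) :
    |S (x + k) - S x - ⟪q, k⟫| ≤ m * ‖k‖ ^ 2 := by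
  have h1 := hmid k
  have h2 := hup k
  have h3 := hup (-k)
  rw [inner_neg_right, norm_neg, ← sub_eq_add_neg] at h3
  rw [abs_le]; constructor <;> linarith

theorem grad_lip {S : Euc n → ℝ} {x x' q q' : Euc n} {m : ℝ} (hm : 0 < m)
    (h : ∀ k, |S (x + k) - S x - ⟪q, k⟫| ≤ m * ‖k‖ ^ 2)
    (h' : ∀ k, |S (x' + k) - S x' - ⟪q', k⟫| ≤ m * ‖k‖ ^ 2) :
    ‖q' - q‖ ≤ 6 * m * ‖x' - x‖ := by
  obtain ⟨k, rfl⟩ : ∃ k, x' = x + k := ⟨x' - x, by simp⟩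
  have key : ∀ l : Euc n, ⟪q' - q, l⟫ ≤ m * (‖k + l‖ ^ 2 + ‖k‖ ^ 2 + ‖l‖ ^ 2) := by
    intro l
    have h1 := abs_le.1 (h (k + l))
    have h2 := abs_le.1 (h k)
    have h3 := abs_le.1 (h' l)
    rw [inner_add_right, ← add_assoc] at h1
    rw [inner_sub_left]
    linarith [h1.1, h1.2, h2.1, h2.2, h3.1, h3.2]
  have key2 : ∀ l : Euc n, ⟪q' - q, l⟫ ≤ 3 * m * (‖k‖ ^ 2 + ‖l‖ ^ 2) := by
    intro l
    have h1 := norm_add_le k l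
    have h2 : ‖k + l‖ ^ 2 ≤ 2 * (‖k‖ ^ 2 + ‖l‖ ^ 2) := by
      have := norm_nonneg (k + l)
      nlinarith [sq_nonneg (‖k‖ - ‖l‖)]
    nlinarith [key l]
  rw [add_sub_cancel_left]
  by_cases hk : ‖k‖ = 0
  · -- then the inner product with every vector is small
    have hk0 : k = 0 := norm_eq_zero.1 hk
    subst hk0
    by_contra hcon
    have hpos : 0 < ‖q' - q‖ := by simpa using hcon
    have h1 := key2 ((1 / (6 * m)) • (q' - q))
    rw [inner_smul_right, real_inner_self_eq_norm_sq, norm_smul, mul_pow, Real.norm_eq_abs, sq_abs,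
      norm_zero] at h1
    have : 3 * m * (0 ^ 2 + (1 / (6 * m)) ^ 2 * ‖q' - q‖ ^ 2) =
      (1 / (12 * m)) * ‖q' - q‖ ^ 2 := by field_simp; ring
    rw [this] at h1
    have h2 : (1 / (12 * m)) < 1 / (6 * m) := by
      apply one_div_lt_one_div_of_lt <;> linarith
    nlinarith [sq_pos_of_pos hpos]
  · have hkp : 0 < ‖k‖ := lt_of_le_of_ne (norm_nonneg _) (Ne.symm hk)
    by_cases hq : ‖q' - q‖ = 0
    · rw [hq]; positivity
    have h1 := key2 ((‖k‖ / ‖q' - q‖) • (q' - q))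
    rw [inner_smul_right, real_inner_self_eq_norm_sq, norm_smul, mul_pow, Real.norm_eq_abs,
      sq_abs] at h1
    have e1 : ‖k‖ / ‖q' - q‖ * ‖q' - q‖ ^ 2 = ‖k‖ * ‖q' - q‖ := by field_simp
    have e2 : (‖k‖ / ‖q' - q‖) ^ 2 * ‖q' - q‖ ^ 2 = ‖k‖ ^ 2 := by field_simp
    rw [e1, e2] at h1
    have : ‖k‖ * ‖q' - q‖ ≤ ‖k‖ * (6 * m * ‖k‖) := by nlinarith
    exact le_of_mul_le_mul_left this hkp

/-- Infimal convolution is `C^{1,1}`. -/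
theorem inf_conv {φ : Euc n → ℝ} {L m : ℝ} (hm : 0 < m)
    (hlip : ∀ x x', φ x ≤ φ x' + L * ‖x - x'‖)
    (hmid : ∀ x k, 2 * φ x ≤ φ (x + k) + φ (x - k)) :
    ∃ (g : Euc n → ℝ) (Y : Euc n → Euc n),
      (∀ x z, g x ≤ φ z + m * ‖x - z‖ ^ 2) ∧ (∀ x, ∃ z, g x = φ z + m * ‖x - z‖ ^ 2) ∧
      (∀ x k, |g (x + k) - g x - ⟪Y x, k⟫| ≤ m * ‖k‖ ^ 2) := by
  have hc := continuous_of_lip hlip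
  have hex : ∀ x : Euc n, ∃ w, ∀ w', φ (x - w) + m * ‖w‖ ^ 2 ≤ φ (x - w') + m * ‖w'‖ ^ 2 := by
    intro x
    apply exists_min (φ := fun w => φ (x - w) + m * ‖w‖ ^ 2) (by fun_prop) (c := φ x) (L := L) hm
    intro w
    have := hlip x (x - w)
    rw [sub_sub_cancel] at this
    linarith
  choose W hW using hex
  have hle : ∀ x z, φ (x - W x) + m * ‖W x‖ ^ 2 ≤ φ z + m * ‖x - z‖ ^ 2 := by
    intro x z
    have := hW x (x - z)
    rwa [sub_sub_cancel] at this
  refine ⟨fun x => φ (x - W x) + m * ‖W x‖ ^ 2, fun x => (2 * m) • W x, hle,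
    fun x => ⟨x - W x, by simp⟩, ?_⟩
  intro x
  refine two_sided (S := fun x => φ (x - W x) + m * ‖W x‖ ^ 2) (q := (2 * m) • W x) ?_ ?_
  · intro k
    have h1 := hle x (x - (1 / 2 : ℝ) • (W (x + k) + W (x - k)))
    rw [sub_sub_cancel] at h1
    have h2 := hmid (x - (1 / 2 : ℝ) • (W (x + k) + W (x - k)))
      (k - (1 / 2 : ℝ) • (W (x + k) - W (x - k)))
    have e1 : x - (1 / 2 : ℝ) • (W (x + k) + W (x - k)) + (k - (1 / 2 : ℝ) • (W (x + k) - W (x - k)))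
      = x + k - W (x + k) := by module
    have e2 : x - (1 / 2 : ℝ) • (W (x + k) + W (x - k)) - (k - (1 / 2 : ℝ) • (W (x + k) - W (x - k)))
      = x - k - W (x - k) := by module
    rw [e1, e2] at h2
    have h3 : 2 * ‖(1 / 2 : ℝ) • (W (x + k) + W (x - k))‖ ^ 2 ≤
        ‖W (x + k)‖ ^ 2 + ‖W (x - k)‖ ^ 2 := by
      rw [norm_smul, mul_pow]
      have := parallelogram_law_with_norm ℝ (W (x + k)) (W (x - k))
      norm_num
      nlinarith [sq_nonneg ‖W (x + k) - W (x - k)‖]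
    have h4 := mul_le_mul_of_nonneg_left h3 hm.le
    linarith
  · intro k
    have h1 := hle (x + k) (x - W x)
    have e : x + k - (x - W x) = W x + k := by abel
    rw [e, norm_add_sq_real] at h1
    rw [inner_smul_left]
    simp only [conj_trivial]
    linarith

/-- Second order expansion at a point of differentiability of the gradient. -/
theorem taylor_two {g : Euc n → ℝ} {Y : Euc n → Euc n} {m : ℝ}
    (hg : ∀ x k, |g (x + k) - g x - ⟪Y x, k⟫| ≤ m * ‖k‖ ^ 2)
    {x : Euc n} {A : Euc n →L[ℝ] Euc n} (hA : HasFDerivAt Y A x) {η : ℝ} (hη : 0 < η) :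
    ∀ᶠ k in 𝓝 (0 : Euc n),
      |g (x + k) - g x - ⟪Y x, k⟫ - 1 / 2 * ⟪A k, k⟫| ≤ η * ‖k‖ ^ 2 := by
  have hder : ∀ x, HasFDerivAt g (innerSL ℝ (Y x)) x := by
    intro x
    rw [hasFDerivAt_iff_isLittleO_nhds_zero]
    have h1 : (fun k : Euc n => ‖k‖ ^ 2) =o[𝓝 0] fun k => k := by
      have := isLittleO_pow_id (𝕜 := ℝ) (n := 2) (by norm_num)
      have h2 := this.comp_tendsto (tendsto_norm_zero (E := Euc n))
      exact IsLittleO.of_norm_right h2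
    refine IsBigO.trans_isLittleO ?_ h1
    apply IsBigO.of_bound m
    filter_upwards with k
    simpa using hg x k
  rw [hasFDerivAt_iff_isLittleO_nhds_zero] at hA
  have hA' := hA.bound hη
  rw [Metric.eventually_nhds_iff_ball] at hA' ⊢
  obtain ⟨ρ, hρ, hb⟩ := hA'
  refine ⟨ρ, hρ, ?_⟩
  intro k hk
  let e : ℝ → ℝ := fun t => g (x + t • k) - t * ⟪Y x, k⟫ - 1 / 2 * t ^ 2 * ⟪A k, k⟫
  have he : ∀ t, HasDerivAt e (⟪Y (x + t • k) - Y x - A (t • k), k⟫) t := by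
    intro t
    have h1 : HasDerivAt (fun t : ℝ => x + t • k) k t := by
      simpa using ((hasDerivAt_id t).smul_const k).const_add x
    have h2 := (hder (x + t • k)).comp_hasDerivAt t h1
    have h3 : HasDerivAt (fun t : ℝ => t * ⟪Y x, k⟫) ⟪Y x, k⟫ t := by
      simpa using (hasDerivAt_id t).mul_const ⟪Y x, k⟫
    have h4 : HasDerivAt (fun t : ℝ => 1 / 2 * t ^ 2 * ⟪A k, k⟫) (t * ⟪A k, k⟫) t := by
      have := (((hasDerivAt_id t).pow 2).const_mul (1 / 2 : ℝ)).mul_const ⟪A k, k⟫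
      refine this.congr_deriv ?_
      simp
    have h5 := (h2.sub h3).sub h4
    refine h5.congr_deriv ?_
    simp [inner_sub_left, inner_smul_left]
  have hbd : ∀ t ∈ Ico (0 : ℝ) 1, ‖⟪Y (x + t • k) - Y x - A (t • k), k⟫‖ ≤ η * ‖k‖ ^ 2 := by
    intro t ht
    have hmem : t • k ∈ ball (0 : Euc n) ρ := by
      rw [mem_ball_zero_iff] at hk ⊢
      rw [norm_smul, Real.norm_eq_abs, abs_of_nonneg ht.1]
      nlinarith [ht.1, ht.2, norm_nonneg k]
    have h1 := hb _ hmem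
    have h2 := norm_inner_le_norm (𝕜 := ℝ) (Y (x + t • k) - Y x - A (t • k)) k
    have h3 : ‖t • k‖ ≤ ‖k‖ := by
      rw [norm_smul, Real.norm_eq_abs, abs_of_nonneg ht.1]
      nlinarith [ht.1, ht.2, norm_nonneg k]
    calc _ ≤ _ := h2
      _ ≤ (η * ‖k‖) * ‖k‖ := by gcongr; exact h1.trans (by gcongr)
      _ = _ := by ring
  have := norm_image_sub_le_of_norm_deriv_le_segment_01'
    (fun t _ => (he t).hasDerivWithinAt) hbd
  simp only [e, Real.norm_eq_abs] at this
  simp only [one_smul, zero_smul, add_zero, zero_mul, sub_zero, one_mul, one_pow, mul_one] at this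
  convert this using 2
  ring

theorem exists_diff_point {X Y : Euc n → Euc n} {C : NNReal} {C' : NNReal}
    (hY : LipschitzWith C Y) (hX : AntilipschitzWith C' X) {r : ℝ} (hr : 0 < r) :
    ∃ p ∈ ball (0 : Euc n) r, DifferentiableAt ℝ Y (X p) := by
  by_contra hcon
  push Not at hcon
  let d : ℝ := (Module.finrank ℝ (Euc n) : ℝ)
  have hae := hY.ae_differentiableAt (μ := μH[(Module.finrank ℝ (Euc n) : ℝ)])
  rw [ae_iff] at hae
  have h1 := hX.hausdorffMeasure_preimage_le (d := d) (by positivity)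
    {x | ¬ DifferentiableAt ℝ Y x}
  rw [show μH[d] {x | ¬ DifferentiableAt ℝ Y x} = 0 from hae, mul_zero] at h1
  have h2 : ball (0 : Euc n) r ⊆ X ⁻¹' {x | ¬ DifferentiableAt ℝ Y x} := fun p hp => hcon p hp
  have h3 : μH[d] (ball (0 : Euc n) r) ≤ 0 := (measure_mono h2).trans h1
  have h4 : 0 < μH[d] (ball (0 : Euc n) r) := by
    exact isOpen_ball.measure_pos (μH[(Module.finrank ℝ (Euc n) : ℝ)]) ⟨0, mem_ball_self hr⟩
  exact absurd h3 (not_le.2 h4)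

/-- choice of the penalization parameter -/
theorem exists_penal {K : Set (Euc n)} (hK : IsCompact K) {u w : Euc n → ℝ}
    (hu : UpperSemicontinuousOn u K) (hw : UpperSemicontinuousOn w K)
    (hbd : ∀ x ∈ frontier K, u x + w x ≤ 0) {M : ℝ} (hM : 0 < M) :
    ∃ l : ℝ, 8 ≤ l ∧ ∀ y ∈ K, ∀ z ∈ K, M / 2 + l / 8 * ‖y - z‖ ^ 2 ≤ u y + w z →
      y ∈ interior K ∧ z ∈ interior K := by
  by_contra hcon
  push Not at hcon
  have h1 : ∀ j : ℕ, ∃ y ∈ K, ∃ z ∈ K, M / 2 + ((j : ℝ) + 8) / 8 * ‖y - z‖ ^ 2 ≤ u y + w z ∧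
      ¬ (y ∈ interior K ∧ z ∈ interior K) := by
    intro j
    obtain ⟨y, hy, z, hz, h, h'⟩ := hcon ((j : ℝ) + 8) (by linarith [Nat.cast_nonneg (α := ℝ) j])
    exact ⟨y, hy, z, hz, h, fun hh => h' hh.1 hh.2⟩
  choose y hy z hz hyz hint using h1
  obtain ⟨c, hc⟩ := hu.bddAbove_of_isCompact hK
  obtain ⟨c', hc'⟩ := hw.bddAbove_of_isCompact hK
  obtain ⟨y0, hy0, φ, hφ, hlim⟩ := hK.tendsto_subseq hy
  have hd : Tendsto (fun j => ‖y j - z j‖ ^ 2) atTop (𝓝 0) := by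
    have hb : Tendsto (fun j : ℕ => 8 * |c + c'| * ((j : ℝ) + 1)⁻¹) atTop (𝓝 0) := by
      have := (tendsto_one_div_add_atTop_nhds_zero_nat (𝕜 := ℝ)).const_mul (8 * |c + c'|)
      simpa using this
    refine squeeze_zero (fun _ => by positivity) (fun j => ?_) hb
    have e1 : u (y j) ≤ c := hc (mem_image_of_mem _ (hy j))
    have e2 : w (z j) ≤ c' := hc' (mem_image_of_mem _ (hz j))
    have e3 := hyz j
    have e4 := le_abs_self (c + c')
    have hj : (0 : ℝ) ≤ j := Nat.cast_nonneg j
    rw [← div_eq_mul_inv, le_div_iff₀ (by positivity)]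
    nlinarith [sq_nonneg ‖y j - z j‖]
  have hd' : Tendsto (fun j => y j - z j) atTop (𝓝 0) := by
    rw [tendsto_zero_iff_norm_tendsto_zero]
    have := hd.sqrt
    simpa using this
  have hlimz : Tendsto (z ∘ φ) atTop (𝓝 y0) := by
    have := hlim.sub (hd'.comp hφ.tendsto_atTop)
    rw [sub_zero] at this
    refine this.congr (fun j => ?_)
    simp
  have hy0i : y0 ∉ interior K := by
    intro hmem
    have e1 := hlim.eventually (isOpen_interior.mem_nhds hmem)
    have e2 := hlimz.eventually (isOpen_interior.mem_nhds hmem)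
    obtain ⟨j, hj1, hj2⟩ := (e1.and e2).exists
    exact hint _ ⟨hj1, hj2⟩
  have hfr : y0 ∈ frontier K := ⟨subset_closure hy0, hy0i⟩
  have e0 := hbd y0 hfr
  have e1 := hu y0 hy0 (u y0 + M / 4) (by linarith)
  have e2 := hw y0 hy0 (w y0 + M / 4) (by linarith)
  have t1 : Tendsto (y ∘ φ) atTop (𝓝[K] y0) :=
    tendsto_nhdsWithin_iff.2 ⟨hlim, Eventually.of_forall fun j => hy _⟩
  have t2 : Tendsto (z ∘ φ) atTop (𝓝[K] y0) :=
    tendsto_nhdsWithin_iff.2 ⟨hlimz, Eventually.of_forall fun j => hz _⟩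
  obtain ⟨j, hj1, hj2⟩ := ((t1.eventually e1).and (t2.eventually e2)).exists
  have e3 := hyz (φ j)
  simp only [Function.comp] at hj1 hj2
  have : 0 ≤ (((φ j : ℕ) : ℝ) + 8) / 8 * ‖y (φ j) - z (φ j)‖ ^ 2 := by positivity
  linarith

set_option maxHeartbeats 1000000 in
theorem core {K : Set (Euc n)} (hK : IsCompact K) {u w : Euc n → ℝ}
    (hu : UpperSemicontinuousOn u K) (hw : UpperSemicontinuousOn w K)
    (hbd : ∀ x ∈ frontier K, u x + w x ≤ 0) {x₀ : Euc n} (hx₀ : x₀ ∈ K)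
    (hM : 0 < u x₀ + w x₀) :
    ∃ y ∈ interior K, ∃ z ∈ interior K, 0 < u y + w z ∧
      ∃ (A : Euc n →L[ℝ] Euc n) (p q : Euc n) (δ : ℝ), 0 < δ ∧ ∀ η > 0,
        (∀ᶠ k in 𝓝 (0 : Euc n), u (y + k) ≤ u y + ⟪p, k⟫ + 1 / 2 * ⟪A k, k⟫ + η * ‖k‖ ^ 2) ∧
        (∀ᶠ k in 𝓝 (0 : Euc n), w (z + k) ≤
          w z + ⟪q, k⟫ - 1 / 2 * ⟪A k, k⟫ - δ / 2 * ‖k‖ ^ 2 + η * ‖k‖ ^ 2) := by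
  set M := u x₀ + w x₀ with hMdef
  obtain ⟨l, hl8, hloc⟩ := exists_penal hK hu hw hbd hM
  obtain ⟨R, hR1, hR⟩ : ∃ R : ℝ, 0 < R ∧ ∀ y ∈ K, ‖y‖ ≤ R := by
    obtain ⟨R, hR⟩ := hK.isBounded.exists_norm_le
    exact ⟨max R 1, by positivity, fun y hy => (hR y hy).trans (le_max_left _ _)⟩
  obtain ⟨δ, hδ0, hδ1, hδR⟩ : ∃ δ : ℝ, 0 < δ ∧ δ ≤ 1 ∧ δ * R ^ 2 ≤ M / 4 := by
    refine ⟨min 1 (M / 4 / R ^ 2), by positivity, min_le_left _ _, ?_⟩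
    rw [← le_div_iff₀ (by positivity)]
    exact min_le_right _ _
  obtain ⟨r, hr0, hr1, hrR⟩ : ∃ r : ℝ, 0 < r ∧ r ≤ 1 ∧ r * (1 + 2 * R) ≤ M / 4 := by
    refine ⟨min 1 (M / 4 / (1 + 2 * R)), by positivity, min_le_left _ _, ?_⟩
    rw [← le_div_iff₀ (by positivity)]
    exact min_le_right _ _
  have hne : K.Nonempty := ⟨x₀, hx₀⟩
  have hl0 : 0 < l := by linarith
  -- the parameter m = l - δ/2
  obtain ⟨m, hm⟩ : ∃ m, m = l - δ / 2 := ⟨_, rfl⟩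
  have hm0 : 0 < m := by linarith
  have usc1 : ∀ (φ : Euc n → ℝ) (c : ℝ), UpperSemicontinuousOn φ K →
      UpperSemicontinuousOn (fun y => φ y + c * ‖y‖ ^ 2) K := by
    intro φ c hφ
    apply hφ.add
    apply ContinuousOn.upperSemicontinuousOn
    fun_prop
  obtain ⟨f, hf⟩ := IsSup.exists hK hne l (usc1 u (-(l / 2)) hu)
  obtain ⟨h, hh⟩ := IsSup.exists hK hne l (usc1 w (-(l / 2)) hw)
  obtain ⟨φ, hφ⟩ := IsSup.exists hK hne l
    (usc1 _ (l ^ 2 / (4 * m)) (usc1 u (-(l / 2)) hu))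
  obtain ⟨g, Y, hg1, hg2, hg3⟩ := inf_conv hm0 (hφ.lip hR hl0.le) hφ.mid
  have hYlip : LipschitzWith (Real.toNNReal (6 * m)) Y := by
    apply LipschitzWith.of_dist_le_mul
    intro x x'
    rw [dist_eq_norm, dist_eq_norm, Real.coe_toNNReal _ (by positivity)]
    exact grad_lip hm0 (hg3 x') (hg3 x)
  -- maxima of the perturbed sums
  have hSlip : ∀ x x', f x + h x ≤ f x' + h x' + (2 * l * R) * ‖x - x'‖ := by
    intro x x'
    have := hf.lip hR hl0.le x x'
    have := hh.lip hR hl0.le x x'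
    linarith
  have hfc := continuous_of_lip (hf.lip hR hl0.le)
  have hhc := continuous_of_lip (hh.lip hR hl0.le)
  have hX : ∀ p : Euc n, ∃ x, ∀ x', -(f x + h x) + ⟪p, x⟫ + m * ‖x‖ ^ 2 ≤
      -(f x' + h x') + ⟪p, x'⟫ + m * ‖x'‖ ^ 2 := by
    intro p
    apply exists_min (φ := fun x => -(f x + h x) + ⟪p, x⟫ + m * ‖x‖ ^ 2) (by fun_prop)
      (c := -(f 0 + h 0)) (L := 2 * l * R + ‖p‖) hm0
    intro x
    have h1 := hSlip x 0
    rw [sub_zero] at h1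
    have h2 := abs_le.1 (abs_real_inner_le_norm p x)
    linarith [h2.1]
  choose X hX using hX
  have hup : ∀ p k, f (X p + k) + h (X p + k) ≤
      f (X p) + h (X p) + ⟪p + (2 * m) • X p, k⟫ + m * ‖k‖ ^ 2 := by
    intro p k
    have h1 := hX p (X p + k)
    rw [norm_add_sq_real, inner_add_right] at h1
    rw [inner_add_left, inner_smul_left]
    simp only [conj_trivial]
    linarith
  have htwo := fun p => two_sided (S := fun x => f x + h x) (x := X p) (q := p + (2 * m) • X p)
    (m := m) (fun k => by linarith [hf.mid (X p) k, hh.mid (X p) k]) (hup p)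
  have hXanti : AntilipschitzWith (Real.toNNReal (8 * m)) X := by
    apply AntilipschitzWith.of_le_mul_dist
    intro p p'
    rw [dist_eq_norm, dist_eq_norm, Real.coe_toNNReal _ (by positivity)]
    have h1 := grad_lip (S := fun x => f x + h x) hm0 (htwo p') (htwo p)
    have e : p - p' = (p + (2 * m) • X p - (p' + (2 * m) • X p')) - (2 * m) • (X p - X p') := by
      module
    rw [e]
    refine (norm_sub_le _ _).trans ?_
    rw [norm_smul, Real.norm_eq_abs, abs_of_pos (by positivity : 0 < 2 * m)]
    linarith
  obtain ⟨p, hp, hdiff⟩ := exists_diff_point hYlip hXanti hr0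
  obtain ⟨A, hA⟩ := hdiff
  obtain ⟨x, hx⟩ : ∃ x, x = X p := ⟨_, rfl⟩
  have hXp := hX p
  have hupp := hup p
  rw [← hx] at hA hXp hupp
  set q := p + (2 * m) • x with hq
  obtain ⟨y, hy, hfy⟩ := hf.ex x
  obtain ⟨z, hz, hhz⟩ := hh.ex x
  -- f ≤ g
  have hfg : ∀ x', f x' ≤ g x' := by
    intro x'
    obtain ⟨ζ, hζ⟩ := hg2 x'
    obtain ⟨y', hy', e⟩ := hf.ex x'
    have h1 := hφ.le ζ y' hy'
    rw [hζ, e]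
    have h2 : 0 ≤ m * ‖(x' - ζ) - (l / (2 * m)) • y'‖ ^ 2 := by positivity
    rw [norm_sub_sq_real, inner_smul_right, norm_smul, mul_pow, Real.norm_eq_abs, sq_abs,
      inner_sub_left] at h2
    have h3 : m * (‖x' - ζ‖ ^ 2 - 2 * (l / (2 * m) * (⟪x', y'⟫ - ⟪ζ, y'⟫)) +
        (l / (2 * m)) ^ 2 * ‖y'‖ ^ 2) = m * ‖x' - ζ‖ ^ 2 - l * ⟪x', y'⟫ + l * ⟪ζ, y'⟫ +
        l ^ 2 / (4 * m) * ‖y'‖ ^ 2 := by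
      field_simp; ring
    rw [h3] at h2
    linarith
  -- g is below any paraboloid above f
  have hgP : ∀ (c : ℝ) (ζ : Euc n), (∀ x', f x' ≤ c + m * ‖x' - ζ‖ ^ 2) →
      ∀ x', g x' ≤ c + m * ‖x' - ζ‖ ^ 2 := by
    intro c ζ hP x'
    have h1 := hg1 x' ζ
    obtain ⟨y', hy', e⟩ := hφ.ex ζ
    have h2 := hP (ζ + (l / (2 * m)) • y')
    have h3 := hf.le (ζ + (l / (2 * m)) • y') y' hy'
    rw [add_sub_cancel_left, norm_smul, mul_pow, Real.norm_eq_abs, sq_abs] at h2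
    rw [inner_add_left, inner_smul_left, real_inner_self_eq_norm_sq] at h3
    simp only [conj_trivial] at h3
    have e1 : l * (⟪ζ, y'⟫ + l / (2 * m) * ‖y'‖ ^ 2) - m * ((l / (2 * m)) ^ 2 * ‖y'‖ ^ 2)
      = l * ⟪ζ, y'⟫ + l ^ 2 / (4 * m) * ‖y'‖ ^ 2 := by
      field_simp; ring
    linarith
  have hgQ : ∀ k, h (x + k) ≤ f x + h x + ⟪q, k⟫ + m * ‖k‖ ^ 2 - g (x + k) := by
    intro k
    obtain ⟨z', hz', e⟩ := hh.ex (x + k)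
    -- P(x + s) = S x + <q,s> + m |s|^2 - h (x+k) - l <s - k, z'>
    obtain ⟨b, hb⟩ : ∃ b : Euc n, b = q - l • z' := ⟨_, rfl⟩
    have sq : ∀ s : Euc n, f x + h x + ⟪q, s⟫ + m * ‖s‖ ^ 2 - h (x + k) - l * ⟪s - k, z'⟫ =
        (f x + h x - h (x + k) + l * ⟪k, z'⟫ - ‖b‖ ^ 2 / (4 * m)) +
          m * ‖(x + s) - (x - (1 / (2 * m)) • b)‖ ^ 2 := by
      intro s
      have e1 : (x + s) - (x - (1 / (2 * m)) • b) = s + (1 / (2 * m)) • b := by abel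
      have e2 : ⟪q, s⟫ = ⟪b, s⟫ + l * ⟪s, z'⟫ := by
        rw [hb, inner_sub_left, inner_smul_left, real_inner_comm s z']
        simp
      rw [e1, norm_add_sq_real, norm_smul, mul_pow, Real.norm_eq_abs, sq_abs, inner_smul_right, e2,
        inner_sub_left s k, real_inner_comm b s]
      field_simp
      ring
    have h1 := hgP (c := f x + h x - h (x + k) + l * ⟪k, z'⟫ - ‖b‖ ^ 2 / (4 * m))
      (ζ := x - (1 / (2 * m)) • b) (by
        intro x'
        obtain ⟨s, rfl⟩ : ∃ s, x' = x + s := ⟨x' - x, by simp⟩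
        rw [← sq s]
        have h2 := hh.le (x + s) z' hz'
        have h3 := hupp s
        have e3 : ⟪x + s, z'⟫ = ⟪x + k, z'⟫ + ⟪s - k, z'⟫ := by
          rw [← inner_add_left]; congr 1; abel
        rw [e3] at h2
        linarith) (x + k)
    rw [← sq k] at h1
    simp only [sub_self, inner_zero_left, mul_zero, sub_zero] at h1
    linarith
  have hgx : g x = f x := by
    have h1 := hgQ 0
    simp at h1
    exact le_antisymm (by linarith) (hfg x)
  -- location
  have hlocal : M / 2 + l / 8 * ‖y - z‖ ^ 2 ≤ u y + w z := by
    have h1 := hXp x₀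
    have h2 := hf.le x₀ x₀ hx₀
    have h3 := hh.le x₀ x₀ hx₀
    rw [real_inner_self_eq_norm_sq] at h2 h3
    have e1 := norm_sub_sq_real x y
    have e2 := norm_sub_sq_real x z
    have h4 : u y + w z - l / 2 * ‖x - y‖ ^ 2 - l / 2 * ‖x - z‖ ^ 2 + δ / 2 * ‖x‖ ^ 2
        - ⟪p, x - x₀⟫ ≥ M + δ / 2 * ‖x₀‖ ^ 2 := by
      rw [inner_sub_right, e1, e2, hMdef]
      rw [hfy, hhz, hm] at h1
      linarith
    have h5 : ‖x‖ ≤ ‖x - y‖ + R := by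
      have := norm_add_le (x - y) y
      rw [sub_add_cancel] at this
      linarith [hR y hy]
    have h6 : ‖x - x₀‖ ≤ ‖x - y‖ + 2 * R := by
      have := norm_sub_le x x₀
      linarith [hR x₀ hx₀]
    have h7 : -⟪p, x - x₀⟫ ≤ r * (‖x - y‖ + 2 * R) := by
      have a1 := abs_le.1 (abs_real_inner_le_norm p (x - x₀))
      have a2 : ‖p‖ * ‖x - x₀‖ ≤ r * (‖x - y‖ + 2 * R) := by
        have : ‖p‖ ≤ r := (mem_ball_zero_iff.1 hp).le
        gcongr
      linarith [a1.1]
    have h8 : r * ‖x - y‖ ≤ r + ‖x - y‖ ^ 2 := by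
      nlinarith [norm_nonneg (x - y), sq_nonneg (‖x - y‖ - 1)]
    have h9 : δ / 2 * ‖x‖ ^ 2 ≤ δ * R ^ 2 + ‖x - y‖ ^ 2 := by
      have : ‖x‖ ^ 2 ≤ 2 * ‖x - y‖ ^ 2 + 2 * R ^ 2 := by
        have b1 : ‖x‖ ^ 2 ≤ (‖x - y‖ + R) ^ 2 := by gcongr
        linarith [sq_nonneg (‖x - y‖ - R)]
      have b2 : δ / 2 * ‖x‖ ^ 2 ≤ δ / 2 * (2 * ‖x - y‖ ^ 2 + 2 * R ^ 2) := by gcongr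
      have b3 : δ * ‖x - y‖ ^ 2 ≤ 1 * ‖x - y‖ ^ 2 := by gcongr
      linarith
    have h10 : ‖y - z‖ ^ 2 ≤ 2 * (‖x - y‖ ^ 2 + ‖x - z‖ ^ 2) := by
      have a1 : y - z = (x - z) - (x - y) := by abel
      have := norm_sub_le (x - z) (x - y)
      rw [← a1] at this
      have b1 : ‖y - z‖ ^ 2 ≤ (‖x - z‖ + ‖x - y‖) ^ 2 := by gcongr
      linarith [sq_nonneg (‖x - y‖ - ‖x - z‖)]
    have h11 : 0 ≤ δ / 2 * ‖x₀‖ ^ 2 := by positivity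
    have h12 : 8 * ‖x - y‖ ^ 2 ≤ l * ‖x - y‖ ^ 2 := by gcongr
    have h13 : 0 ≤ l * ‖x - z‖ ^ 2 := by positivity
    have h14 : l / 8 * ‖y - z‖ ^ 2 ≤ l / 8 * (2 * (‖x - y‖ ^ 2 + ‖x - z‖ ^ 2)) := by gcongr
    linarith
  obtain ⟨hyi, hzi⟩ := hloc y hy z hz hlocal
  refine ⟨y, hyi, z, hzi, ?_, A - l • ContinuousLinearMap.id ℝ (Euc n), Y x - l • x,
    q - Y x - l • x, δ, hδ0, ?_⟩
  · have : 0 ≤ l / 8 * ‖y - z‖ ^ 2 := by positivity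
    linarith
  intro η hη
  have htay := taylor_two hg3 hA hη
  have hinK : ∀ y ∈ interior K, ∀ᶠ k in 𝓝 (0 : Euc n), y + k ∈ K := by
    intro y hy
    have : Tendsto (fun k : Euc n => y + k) (𝓝 0) (𝓝 y) := by
      simpa using (continuous_const_add y).tendsto (0 : Euc n)
    exact this.eventually (mem_interior_iff_mem_nhds.1 hy)
  have eA : ∀ k : Euc n, ⟪(A - l • ContinuousLinearMap.id ℝ (Euc n)) k, k⟫ =
      ⟪A k, k⟫ - l * ‖k‖ ^ 2 := by
    intro k
    simp [inner_sub_left, inner_smul_left]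
  have exy : ∀ y k : Euc n, ⟪x + k, y + k⟫ = ⟪x, y⟫ + ⟪x, k⟫ + ⟪y, k⟫ + ‖k‖ ^ 2 := by
    intro y k
    rw [inner_add_left, inner_add_right, inner_add_right, real_inner_self_eq_norm_sq,
      real_inner_comm y k]
    ring
  constructor
  · filter_upwards [htay, hinK y hyi] with k hk hkK
    have h1 := hf.le (x + k) (y + k) hkK
    have h2 := hfg (x + k)
    have h3 := (abs_le.1 hk).2
    rw [exy, norm_add_sq_real] at h1
    rw [eA, inner_sub_left, inner_smul_left]
    simp only [conj_trivial]
    rw [hgx, hfy] at h3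
    linarith
  · filter_upwards [htay, hinK z hzi] with k hk hkK
    have h1 := hh.le (x + k) (z + k) hkK
    have h2 := hgQ k
    have h3 := (abs_le.1 hk).1
    rw [exy, norm_add_sq_real] at h1
    rw [eA, inner_sub_left, inner_sub_left, inner_smul_left]
    simp only [conj_trivial]
    rw [hgx] at h3
    rw [hhz, hm] at h2
    linarith

end Core

section Final

variable {n : ℕ}

/-- The symmetric matrix of the quadratic form of `T`. -/
def symOf (T : Euc n →L[ℝ] Euc n) : SymMat n :=
  ⟨Matrix.of fun i j => 1 / 2 * (⟪T (EuclideanSpace.single i 1), EuclideanSpace.single j 1⟫ +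
      ⟪T (EuclideanSpace.single j 1), EuclideanSpace.single i 1⟫), by
    rw [selfAdjoint.mem_iff]
    ext i j
    simp [Matrix.star_apply, add_comm]⟩

theorem symOf_apply (T : Euc n →L[ℝ] Euc n) (i j : Fin n) :
    (symOf T : Matrix (Fin n) (Fin n) ℝ) i j =
      1 / 2 * (⟪T (EuclideanSpace.single i 1), EuclideanSpace.single j 1⟫ +
      ⟪T (EuclideanSpace.single j 1), EuclideanSpace.single i 1⟫) := rfl

theorem symOf_neg_add_id (T : Euc n →L[ℝ] Euc n) (c : ℝ) :
    symOf (-(T + c • ContinuousLinearMap.id ℝ (Euc n))) = -(symOf T + c • symOne n) := by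
  apply Subtype.ext
  ext i j
  have h1 : ((-(symOf T + c • symOne n) : SymMat n) : Matrix (Fin n) (Fin n) ℝ) i j =
    -((symOf T : Matrix (Fin n) (Fin n) ℝ) i j + c * (1 : Matrix (Fin n) (Fin n) ℝ) i j) := rfl
  rw [h1, symOf_apply, symOf_apply]
  by_cases hij : i = j
  · subst hij
    simp [inner_add_left, inner_smul_left]
    ring
  · have hji : j ≠ i := fun h => hij h.symm
    have o1 : ⟪(EuclideanSpace.single i 1 : Euc n), EuclideanSpace.single j 1⟫ = 0 := by
      simp [EuclideanSpace.inner_single_left, hij]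
    have o2 : ⟪(EuclideanSpace.single j 1 : Euc n), EuclideanSpace.single i 1⟫ = 0 := by
      simp [EuclideanSpace.inner_single_left, hji]
    simp [inner_add_left, inner_smul_left, hij, o1, o2]
    ring

/-- quadratic test function -/
def quadFn (c y : Euc n) (T : Euc n →L[ℝ] Euc n) (x : Euc n) : ℝ :=
  ⟪c, x - y⟫ + 1 / 2 * ⟪T (x - y), x - y⟫

theorem quadFn_contDiff (c y : Euc n) (T : Euc n →L[ℝ] Euc n) :
    ContDiff ℝ 2 (quadFn c y T) := by
  unfold quadFn
  have h1 : ContDiff ℝ 2 (fun x : Euc n => x - y) := by fun_prop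
  have h2 : ContDiff ℝ 2 (fun x : Euc n => T (x - y)) := by fun_prop
  exact (contDiff_const.inner ℝ h1).add (contDiff_const.mul (h2.inner ℝ h1))

theorem quadFn_hess (c y : Euc n) (T : Euc n →L[ℝ] Euc n) (x : Euc n) :
    hessMat (quadFn c y T) x = symOf T := by
  have h1 : ∀ x, HasFDerivAt (quadFn c y T)
      (innerSL ℝ c + (1 / 2 : ℝ) • (innerSL ℝ (T (x - y)) + (innerSL ℝ (x - y)).comp T)) x := by
    intro x
    have hs : HasFDerivAt (fun x : Euc n => x - y) (ContinuousLinearMap.id ℝ (Euc n)) x :=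
      (hasFDerivAt_id x).sub_const y
    have hT : HasFDerivAt (fun x : Euc n => T (x - y)) (T.comp (ContinuousLinearMap.id ℝ _)) x :=
      T.hasFDerivAt.comp x hs
    have ha : HasFDerivAt (fun x : Euc n => ⟪c, x - y⟫) ((innerSL ℝ c).comp
      (ContinuousLinearMap.id ℝ (Euc n))) x := (innerSL ℝ c).hasFDerivAt.comp x hs
    have hb := ((hT.inner ℝ hs).const_mul (1 / 2 : ℝ))
    refine (ha.add hb).congr_fderiv ?_
    ext k
    simp [fderivInnerCLM_apply, real_inner_comm, inner_sub_left, inner_sub_right]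
    ring
  have h2 : fderiv ℝ (quadFn c y T) = fun x =>
      (innerSL ℝ c + (1 / 2 : ℝ) • (innerSL ℝ (T (x - y)) + (innerSL ℝ (x - y)).comp T)) :=
    funext fun x => (h1 x).fderiv
  -- the derivative is affine
  let Λ : Euc n →L[ℝ] (Euc n →L[ℝ] ℝ) := (1 / 2 : ℝ) • ((innerSL ℝ).comp T +
    ((ContinuousLinearMap.compL ℝ (Euc n) (Euc n) ℝ).flip T).comp (innerSL ℝ))
  have h3 : fderiv ℝ (quadFn c y T) = fun x => innerSL ℝ c + Λ (x - y) := by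
    rw [h2]
    funext x
    ext k
    simp [Λ]
  have h4 : HasFDerivAt (fun x : Euc n => innerSL ℝ c + Λ (x - y)) Λ x := by
    have hs : HasFDerivAt (fun x : Euc n => x - y) (ContinuousLinearMap.id ℝ (Euc n)) x :=
      (hasFDerivAt_id x).sub_const y
    exact (Λ.hasFDerivAt.comp x hs).const_add _
  ext i j
  rw [symOf_apply, hessMat, iteratedFDeriv_two_apply, h3, h4.fderiv]
  simp [Λ, real_inner_comm]
  ring

theorem touch {F : Set (SymMat n)} (hF : IsClosed F) {X : Set (Euc n)} (hX : IsOpen X)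
    {u : Euc n → EReal} (hu : IsTypeF F X u) {y : Euc n} (hy : y ∈ X) {r : ℝ}
    (hr : u y = (r : EReal)) {p : Euc n} {A : Euc n →L[ℝ] Euc n}
    (h : ∀ η > 0, ∀ᶠ k in 𝓝 (0 : Euc n),
      u (y + k) ≤ ((r + ⟪p, k⟫ + 1 / 2 * ⟪A k, k⟫ + η * ‖k‖ ^ 2 : ℝ) : EReal)) :
    symOf A ∈ F := by
  by_contra hA
  have hev : ∀ᶠ η : ℝ in 𝓝 0, symOf A + (4 * η) • symOne n ∈ Fᶜ := by
    have hc : Continuous (fun η : ℝ => symOf A + (4 * η) • symOne n) := by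
      apply Continuous.subtype_mk
      change Continuous (fun η : ℝ => (symOf A : Matrix (Fin n) (Fin n) ℝ) +
        (4 * η) • (symOne n : Matrix (Fin n) (Fin n) ℝ))
      fun_prop
    have := hc.tendsto 0
    refine this.eventually (hF.isOpen_compl.mem_nhds ?_)
    simpa using hA
  obtain ⟨η, hηF, hη⟩ := ((hev.filter_mono nhdsWithin_le_nhds).and
    (self_mem_nhdsWithin (s := Ioi (0 : ℝ)) (a := 0))).exists
  have hη0 : 0 < η := hη
  set T := -(A + (4 * η) • ContinuousLinearMap.id ℝ (Euc n)) with hT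
  have htype : IsTypeFC2 (dirDual F) X (quadFn (-p) y T) := by
    refine ⟨(quadFn_contDiff _ _ _).contDiffOn, fun x _ => ⟨symOf T, ?_, (quadFn_hess _ _ _ _).symm⟩⟩
    rw [hT, symOf_neg_add_id]
    intro hmem
    rw [neg_neg] at hmem
    exact hηF (interior_subset hmem)
  have hsub := hu _ htype
  have hXn : ∀ᶠ k in 𝓝 (0 : Euc n), y + k ∈ X := by
    have : Tendsto (fun k : Euc n => y + k) (𝓝 0) (𝓝 y) := by
      simpa using (continuous_const_add y).tendsto (0 : Euc n)
    exact this.eventually (hX.mem_nhds hy)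
  have hb := (h η hη0).and hXn
  rw [Metric.eventually_nhds_iff_ball] at hb
  obtain ⟨ρ, hρ, hb⟩ := hb
  have hmem : ∀ x ∈ closedBall y (ρ / 2), x - y ∈ ball (0 : Euc n) ρ := by
    intro x hx
    rw [mem_closedBall, dist_eq_norm] at hx
    rw [mem_ball_zero_iff]
    linarith
  have := hsub (closedBall y (ρ / 2)) (isCompact_closedBall _ _) (by
      intro x hx
      have := (hb _ (hmem x hx)).2
      rwa [add_sub_cancel] at this) (AffineMap.const ℝ (Euc n) (r - η * (ρ / 2) ^ 2)) (by
      intro x hx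
      have hxs : x ∈ sphere y (ρ / 2) := frontier_closedBall_subset_sphere hx
      have hxn : ‖x - y‖ = ρ / 2 := by rwa [mem_sphere, dist_eq_norm] at hxs
      have h1 := (hb _ (hmem x (sphere_subset_closedBall hxs))).1
      rw [add_sub_cancel] at h1
      refine (add_le_add_left h1 _).trans ?_
      rw [← EReal.coe_add, EReal.coe_le_coe_iff, quadFn, AffineMap.const_apply, hT]
      have e : ⟪(-(A + (4 * η) • ContinuousLinearMap.id ℝ (Euc n))) (x - y), x - y⟫ =
          -(⟪A (x - y), x - y⟫ + 4 * η * ‖x - y‖ ^ 2) := by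
        rw [neg_apply, add_apply, smul_apply, ContinuousLinearMap.id_apply, inner_neg_left,
          inner_add_left, inner_smul_left, real_inner_self_eq_norm_sq]
        simp
      rw [e, inner_neg_left, hxn]
      linarith) y (mem_closedBall_self (by positivity))
  dsimp only at this
  rw [hr, ← EReal.coe_add, EReal.coe_le_coe_iff, AffineMap.const_apply] at this
  simp only [quadFn, sub_self, inner_zero_right, mul_zero, add_zero] at this
  have : 0 < η * (ρ / 2) ^ 2 := by positivity
  linarith

theorem mem_interior_add {F : Set (SymMat n)} (hF : IsDirichletSet F) {A : SymMat n} (hA : A ∈ F)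
    {δ : ℝ} (hδ : 0 < δ) : A + δ • symOne n ∈ interior F := by
  rw [mem_interior]
  have hc : ∀ i j, Continuous fun B : SymMat n => (B : Matrix (Fin n) (Fin n) ℝ) i j := by
    intro i j
    exact (continuous_apply_apply i j).comp continuous_subtype_val
  refine ⟨⋂ i, ⋂ j, {B : SymMat n | |(B : Matrix (Fin n) (Fin n) ℝ) i j -
    ((A + δ • symOne n : SymMat n) : Matrix (Fin n) (Fin n) ℝ) i j| < δ / (n + 1)}, ?_, ?_, ?_⟩
  · intro B hB
    simp only [mem_iInter, mem_ofPred_eq] at hB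
    have : B = A + (B - A) := by abel
    rw [this]
    apply hF.add_psd A hA
    refine Matrix.PosSemidef.of_dotProduct_mulVec_nonneg (B - A).2 ?_
    intro x
    have e1 : ∀ i j, ((B - A : SymMat n) : Matrix (Fin n) (Fin n) ℝ) i j =
      ((B : Matrix (Fin n) (Fin n) ℝ) i j -
        ((A + δ • symOne n : SymMat n) : Matrix (Fin n) (Fin n) ℝ) i j) +
      δ * (1 : Matrix (Fin n) (Fin n) ℝ) i j := by
      intro i j
      have a1 : ((A + δ • symOne n : SymMat n) : Matrix (Fin n) (Fin n) ℝ) i j =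
        (A : Matrix (Fin n) (Fin n) ℝ) i j + δ * (1 : Matrix (Fin n) (Fin n) ℝ) i j := rfl
      have a2 : ((B - A : SymMat n) : Matrix (Fin n) (Fin n) ℝ) i j =
        (B : Matrix (Fin n) (Fin n) ℝ) i j - (A : Matrix (Fin n) (Fin n) ℝ) i j := rfl
      rw [a1, a2]; ring
    have e2 : star x ⬝ᵥ (((B - A : SymMat n) : Matrix (Fin n) (Fin n) ℝ).mulVec x) =
        ∑ i, ∑ j, x i * ((B - A : SymMat n) : Matrix (Fin n) (Fin n) ℝ) i j * x j := by
      simp only [dotProduct, Matrix.mulVec, Finset.mul_sum, star_trivial, mul_assoc]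
    rw [e2]
    have e3 : ∀ i j, x i * (δ * (1 : Matrix (Fin n) (Fin n) ℝ) i j) * x j
        - δ / (n + 1) * ((x i ^ 2 + x j ^ 2) / 2) ≤
        x i * ((B - A : SymMat n) : Matrix (Fin n) (Fin n) ℝ) i j * x j := by
      intro i j
      rw [e1]
      have b1 := (hB i j).le
      set D := (B : Matrix (Fin n) (Fin n) ℝ) i j -
        ((A + δ • symOne n : SymMat n) : Matrix (Fin n) (Fin n) ℝ) i j with hD
      have b2 : |x i * D * x j| ≤ δ / (n + 1) * ((x i ^ 2 + x j ^ 2) / 2) := by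
        rw [abs_mul, abs_mul]
        have b3 : |x i| * |x j| ≤ (x i ^ 2 + x j ^ 2) / 2 := by
          rw [← sq_abs (x i), ← sq_abs (x j)]
          linarith [sq_nonneg (|x i| - |x j|)]
        calc |x i| * |D| * |x j| = |D| * (|x i| * |x j|) := by ring
          _ ≤ _ := by gcongr
      have := (abs_le.1 b2).1
      linarith
    refine le_trans ?_ (Finset.sum_le_sum fun i _ => Finset.sum_le_sum fun j _ => e3 i j)
    have e4 : ∑ i, ∑ j, (x i * (δ * (1 : Matrix (Fin n) (Fin n) ℝ) i j) * x j
        - δ / (n + 1) * ((x i ^ 2 + x j ^ 2) / 2)) =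
        δ * (∑ i, x i ^ 2) - δ / (n + 1) * (n * ∑ i, x i ^ 2) := by
      simp only [Finset.sum_sub_distrib]
      congr 1
      · simp only [Matrix.one_apply, mul_ite, ite_mul, mul_one, mul_zero, zero_mul,
          Finset.sum_ite_eq, Finset.mem_univ, if_true, Finset.mul_sum]
        exact Finset.sum_congr rfl fun i _ => by ring
      · simp only [← Finset.mul_sum, ← Finset.sum_div, Finset.sum_add_distrib, Finset.sum_const,
          Finset.card_univ, Fintype.card_fin, nsmul_eq_mul]
        congr 1
        ring
    rw [e4]
    have e5 : δ * (∑ i, x i ^ 2) - δ / (n + 1) * (n * ∑ i, x i ^ 2) =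
      δ / (n + 1) * ∑ i, x i ^ 2 := by field_simp; ring
    rw [e5]
    positivity
  · refine isOpen_iInter_of_finite fun i => isOpen_iInter_of_finite fun j => ?_
    exact isOpen_lt ((hc i j).sub continuous_const).abs continuous_const
  · simp only [mem_iInter, mem_ofPred_eq, sub_self, abs_zero]
    intro i j
    positivity

theorem trunc_facts {K : Set (Euc n)} {u : Euc n → EReal}
    (hu : UpperSemicontinuousOn u K) {N : ℝ} (hN : 0 ≤ N) (hb : ∀ x ∈ K, u x ≤ (N : EReal)) :
    ∃ u' : Euc n → ℝ, UpperSemicontinuousOn u' K ∧ ∀ x ∈ K,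
      u' x ≤ N ∧ u x ≤ (u' x : EReal) ∧ (u' x = -N ∨ u x = (u' x : EReal)) := by
  have hcoe : ∀ x ∈ K, (((max (u x) ((-N : ℝ) : EReal)).toReal : ℝ) : EReal) =
      max (u x) ((-N : ℝ) : EReal) := by
    intro x hx
    apply EReal.coe_toReal
    · apply ne_of_lt
      exact max_lt ((hb x hx).trans_lt (EReal.coe_lt_top _)) (EReal.coe_lt_top _)
    · apply ne_of_gt
      exact lt_max_of_lt_right (EReal.bot_lt_coe _)
  refine ⟨fun x => (max (u x) ((-N : ℝ) : EReal)).toReal, ?_, ?_⟩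
  · intro x hx c hc
    have h1 : max (u x) ((-N : ℝ) : EReal) < (c : EReal) := by
      rw [← hcoe x hx]; exact EReal.coe_lt_coe_iff.2 hc
    have h2 := hu x hx c (max_lt_iff.1 h1).1
    filter_upwards [h2, self_mem_nhdsWithin] with z hz hzK
    rw [← EReal.coe_lt_coe_iff, hcoe z hzK]
    exact max_lt hz (max_lt_iff.1 h1).2
  · intro x hx
    refine ⟨?_, ?_, ?_⟩
    · rw [← EReal.coe_le_coe_iff, hcoe x hx]
      exact max_le (hb x hx) (EReal.coe_le_coe_iff.2 (by linarith))
    · rw [hcoe x hx]; exact le_max_left _ _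
    · rcases le_total (u x) ((-N : ℝ) : EReal) with h | h
      · left
        dsimp only
        rw [max_eq_right h, EReal.toReal_coe]
      · right
        rw [hcoe x hx, max_eq_left h]

theorem exists_bound {K : Set (Euc n)} (hK : IsCompact K) {u : Euc n → EReal}
    (hu : UpperSemicontinuousOn u K) (hfin : ∀ x ∈ K, u x ≠ ⊤) :
    ∃ N : ℝ, 0 ≤ N ∧ ∀ x ∈ K, u x ≤ (N : EReal) := by
  rcases K.eq_empty_or_nonempty with rfl | hne
  · exact ⟨0, le_rfl, by simp⟩
  obtain ⟨x, hx, hmax⟩ := hu.exists_isMaxOn hne hK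
  refine ⟨max 0 (u x).toReal, le_max_left _ _, fun z hz => ?_⟩
  have h1 : u z ≤ u x := hmax hz
  exact (h1.trans (EReal.le_coe_toReal (hfin x hx))).trans
    (EReal.coe_le_coe_iff.2 (le_max_right _ _))

end Final

/-- Theorem 6.4, the Comparison Principle. -/
theorem comparison_principle {n : ℕ} (F : Set (SymMat n)) (hF : IsDirichletSet F)
    (K : Set (Euc n)) (hK : IsCompact K)
    (u : Euc n → EReal) (hu_usc : UpperSemicontinuousOn u K) (hu_fin : ∀ x ∈ K, u x ≠ ⊤)
    (hu : IsTypeF F (interior K) u)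
    (v : Euc n → EReal) (hv_lsc : LowerSemicontinuousOn v K) (hv_fin : ∀ x ∈ K, v x ≠ ⊥)
    (hv : IsTypeF (dirDual F) (interior K) (fun x => -v x))
    (hbd : ∀ x ∈ frontier K, u x ≤ v x) :
    ∀ x ∈ K, u x ≤ v x := by
  intro x₀ hx₀
  by_contra hcon
  rw [not_le] at hcon
  have hw_usc : UpperSemicontinuousOn (fun x => -v x) K := by
    intro x hx c hc
    have := hv_lsc x hx (-c) (EReal.neg_lt_comm.1 hc)
    filter_upwards [this] with z hz
    exact EReal.neg_lt_comm.1 hz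
  have hw_fin : ∀ x ∈ K, -v x ≠ ⊤ := fun x hx => by
    simpa [EReal.neg_eq_top_iff] using hv_fin x hx
  obtain ⟨N₁, hN₁, hb₁⟩ := exists_bound hK hu_usc hu_fin
  obtain ⟨N₂, hN₂, hb₂⟩ := exists_bound hK hw_usc hw_fin
  obtain ⟨N, hN1, hN2⟩ : ∃ N, N₁ ≤ N ∧ N₂ ≤ N := ⟨max N₁ N₂, le_max_left _ _, le_max_right _ _⟩
  have hN0 : 0 ≤ N := hN₁.trans hN1
  obtain ⟨u', hu', hu'f⟩ := trunc_facts hu_usc hN0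
    (fun x hx => (hb₁ x hx).trans (EReal.coe_le_coe_iff.2 hN1))
  obtain ⟨w', hw', hw'f⟩ := trunc_facts hw_usc hN0
    (fun x hx => (hb₂ x hx).trans (EReal.coe_le_coe_iff.2 hN2))
  have hbd' : ∀ x ∈ frontier K, u' x + w' x ≤ 0 := by
    intro x hx
    have hxK : x ∈ K := hK.isClosed.frontier_subset hx
    obtain ⟨a1, a2, a3⟩ := hu'f x hxK
    obtain ⟨b1, b2, b3⟩ := hw'f x hxK
    rcases a3 with a3 | a3
    · linarith
    rcases b3 with b3 | b3
    · linarith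
    have h1 := hbd x hx
    have h2 : v x = ((-w' x : ℝ) : EReal) := by
      rw [EReal.coe_neg, ← b3, neg_neg]
    rw [a3, h2, EReal.coe_le_coe_iff] at h1
    linarith
  have hM : 0 < u' x₀ + w' x₀ := by
    obtain ⟨a1, a2, a3⟩ := hu'f x₀ hx₀
    obtain ⟨b1, b2, b3⟩ := hw'f x₀ hx₀
    have h1 : ((-w' x₀ : ℝ) : EReal) ≤ v x₀ := by
      rw [EReal.coe_neg]; exact EReal.neg_le.1 b2
    have h2 := (h1.trans_lt hcon).trans_le a2
    rw [EReal.coe_lt_coe_iff] at h2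
    linarith
  obtain ⟨y, hy, z, hz, hpos, A, p, q, δ, hδ, hAη⟩ := core hK hu' hw' hbd' hx₀ hM
  have hinK : ∀ y ∈ interior K, ∀ᶠ k in 𝓝 (0 : Euc n), y + k ∈ K := by
    intro y hy
    have : Tendsto (fun k : Euc n => y + k) (𝓝 0) (𝓝 y) := by
      simpa using (continuous_const_add y).tendsto (0 : Euc n)
    exact this.eventually (mem_interior_iff_mem_nhds.1 hy)
  obtain ⟨a1, -, a3⟩ := hu'f y (interior_subset hy)
  obtain ⟨b1, -, b3⟩ := hw'f z (interior_subset hz)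
  have huy : u y = (u' y : EReal) := a3.resolve_left (fun h => by linarith)
  have hwz : -v z = (w' z : EReal) := b3.resolve_left (fun h => by linarith)
  have hA : symOf A ∈ F := by
    refine touch hF.isClosed isOpen_interior hu hy huy (p := p) (fun η hη => ?_)
    filter_upwards [(hAη η hη).1, hinK y hy] with k hk hkK
    exact (hu'f _ hkK).2.1.trans (EReal.coe_le_coe_iff.2 hk)
  have hclosed : IsClosed (dirDual F) := by
    have : dirDual F = (fun A => -A) ⁻¹' (interior F)ᶜ := rfl
    rw [this]
    exact isOpen_interior.isClosed_compl.preimage continuous_neg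
  have hB : symOf (-(A + δ • ContinuousLinearMap.id ℝ (Euc n))) ∈ dirDual F := by
    refine touch hclosed isOpen_interior hv hz hwz (p := q) (fun η hη => ?_)
    filter_upwards [(hAη η hη).2, hinK z hz] with k hk hkK
    refine (hw'f _ hkK).2.1.trans (EReal.coe_le_coe_iff.2 (hk.trans ?_))
    have e : ⟪(-(A + δ • ContinuousLinearMap.id ℝ (Euc n))) k, k⟫ =
        -(⟪A k, k⟫ + δ * ‖k‖ ^ 2) := by
      rw [neg_apply, add_apply, smul_apply, ContinuousLinearMap.id_apply, inner_neg_left,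
        inner_add_left, inner_smul_left, real_inner_self_eq_norm_sq]
      simp
    rw [e]
    linarith
  rw [symOf_neg_add_id] at hB
  apply hB
  rw [neg_neg]
  exact mem_interior_add hF hA hδ
end
end

section
/- Let F ⊂ Sym²(ℝⁿ) be a Dirichlet set with Dirichlet dual F̃, and let X ⊂ ℝⁿ be open. If u is of type F on X and v is of type F̃ on X, then u + v is subaffine on X (with the convention −∞ + t = −∞). -/
open Set Metric Filter MeasureTheory Asymptotics
open scoped Topology BigOperators RealInnerProductSpace

noncomputable section

section SA
variable {E : Type*} [NormedAddCommGroup E] [InnerProductSpace ℝ E]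

lemma sa_lip (U : E → ℝ) (k : ℝ) (hk : 0 ≤ k) (x1 x2 P1 P2 : E) (hne : x1 ≠ x2)
    (h1 : ∀ y, |U y - U x1 - ⟪P1, y - x1⟫| ≤ k * ‖y - x1‖ ^ 2)
    (h2 : ∀ y, |U y - U x2 - ⟪P2, y - x2⟫| ≤ k * ‖y - x2‖ ^ 2) :
    ‖P1 - P2‖ ≤ 6 * k * ‖x1 - x2‖ := by
  have hd : 0 < ‖x1 - x2‖ := norm_pos_iff.2 (sub_ne_zero.2 hne)
  by_cases hD : P1 - P2 = 0
  · rw [hD, norm_zero]; positivity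
  have hDp : 0 < ‖P1 - P2‖ := norm_pos_iff.2 hD
  set d := ‖x1 - x2‖ with hd'
  set D := P1 - P2 with hD'
  set h : E := (d / ‖D‖) • D with hh
  have hnorm : ‖h‖ = d := by
    rw [hh, norm_smul, Real.norm_of_nonneg (by positivity)]; field_simp
  have hin : ⟪D, h⟫ = d * ‖D‖ := by
    rw [hh, inner_smul_right, real_inner_self_eq_norm_sq]; field_simp
  have a1 := h1 (x1 + h)
  have a2 := h2 (x1 + h)
  have a3 := h2 x1
  rw [add_sub_cancel_left, hnorm] at a1
  have e : x1 + h - x2 = (x1 - x2) + h := by abel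
  rw [e, inner_add_right] at a2
  have hn2 : ‖(x1 - x2) + h‖ ≤ 2 * d := by
    refine (norm_add_le _ _).trans ?_
    rw [hnorm]; linarith
  have hn3 : k * ‖(x1 - x2) + h‖ ^ 2 ≤ k * (2 * d) ^ 2 := by gcongr
  rw [hD', inner_sub_left] at hin
  have b1 := abs_le.1 a1
  have b2 := abs_le.1 (a2.trans hn3)
  have b3 := abs_le.1 a3
  have : d * ‖D‖ ≤ d * (6 * k * d) := by
    nlinarith [b1.1, b1.2, b2.1, b2.2, b3.1, b3.2]
  exact le_of_mul_le_mul_left this hd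

lemma sa_step (U : E → ℝ) (k : ℝ) (hk : 0 ≤ k) (x s h Px Ps : E) (T : E →L[ℝ] E) (τ e κ : ℝ)
    (he : 0 ≤ e) (hκ : 0 ≤ κ)
    (hU : ∀ y, |U y - U s - ⟪Ps, y - s⟫| ≤ k * ‖y - s‖ ^ 2)
    (hs : ‖s - (x + τ • h)‖ ≤ e * ‖h‖) (hs2 : ‖s - x‖ ≤ 2 * ‖h‖)
    (hP : ‖Ps - Px - T (s - x)‖ ≤ κ * ‖s - x‖) :
    |(U (x + (τ + e) • h) - ⟪Px, (τ + e) • h⟫ - (τ + e) ^ 2 / 2 * ⟪T h, h⟫)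
      - (U (x + τ • h) - ⟪Px, τ • h⟫ - τ ^ 2 / 2 * ⟪T h, h⟫)|
      ≤ e * ((2 * κ + (2 * ‖T‖ + 5 * k) * e) * ‖h‖ ^ 2) := by
  set r : E := s - (x + τ • h) with hr
  have A1 := hU (x + (τ + e) • h)
  have A2 := hU (x + τ • h)
  have e1 : x + (τ + e) • h - s = e • h - r := by rw [hr]; module
  have e2 : x + τ • h - s = - r := by rw [hr]; module
  have e3 : s - x = r + τ • h := by rw [hr]; module
  have n1 : k * ‖e • h - r‖ ^ 2 ≤ k * (2 * (e * ‖h‖)) ^ 2 := by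
    gcongr
    refine (norm_sub_le _ _).trans ?_
    rw [norm_smul, Real.norm_of_nonneg he]; linarith
  have n2 : k * ‖- r‖ ^ 2 ≤ k * (e * ‖h‖) ^ 2 := by
    rw [norm_neg]; gcongr
  rw [e1] at A1
  rw [e2] at A2
  replace A1 := abs_le.1 (A1.trans n1)
  replace A2 := abs_le.1 (A2.trans n2)
  have A3 : |⟪Ps - Px - T (s - x), h⟫| ≤ 2 * κ * ‖h‖ ^ 2 := by
    refine (abs_real_inner_le_norm _ _).trans ?_
    have : ‖Ps - Px - T (s - x)‖ ≤ κ * (2 * ‖h‖) := hP.trans (by gcongr)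
    calc _ ≤ κ * (2 * ‖h‖) * ‖h‖ := by gcongr
      _ = _ := by ring
  have A4 : |⟪T r, h⟫| ≤ ‖T‖ * e * ‖h‖ ^ 2 := by
    refine (abs_real_inner_le_norm _ _).trans ?_
    have : ‖T r‖ ≤ ‖T‖ * (e * ‖h‖) := (T.le_opNorm r).trans (by gcongr)
    calc _ ≤ ‖T‖ * (e * ‖h‖) * ‖h‖ := by gcongr
      _ = _ := by ring
  have A5 : |⟪T h, h⟫| ≤ ‖T‖ * ‖h‖ ^ 2 := by
    refine (abs_real_inner_le_norm _ _).trans ?_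
    calc _ ≤ ‖T‖ * ‖h‖ * ‖h‖ := by gcongr; exact T.le_opNorm h
      _ = _ := by ring
  rw [e3, map_add, map_smul] at A3
  simp only [inner_sub_left, inner_sub_right, inner_add_left, inner_smul_left, inner_smul_right,
    inner_neg_right, conj_trivial] at A1 A2 A3 ⊢
  replace A3 := abs_le.1 A3
  replace A4 := abs_le.1 A4
  replace A5 := abs_le.1 A5
  have B3l := mul_le_mul_of_nonneg_left A3.1 he
  have B3r := mul_le_mul_of_nonneg_left A3.2 he
  have B4l := mul_le_mul_of_nonneg_left A4.1 he
  have B4r := mul_le_mul_of_nonneg_left A4.2 he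
  have B5l := mul_le_mul_of_nonneg_left A5.1 (sq_nonneg e)
  have B5r := mul_le_mul_of_nonneg_left A5.2 (sq_nonneg e)
  have B6 : 0 ≤ ‖T‖ * ‖h‖ ^ 2 * e ^ 2 := by positivity
  rw [abs_le]
  constructor <;> nlinarith [A1.1, A1.2, A2.1, A2.2]

lemma sa_expand (S : Set E) (x : E) (U : E → ℝ) (P : E → E) (k : ℝ) (hk : 0 ≤ k)
    (hU : ∀ s ∈ S, ∀ y, |U y - U s - ⟪P s, y - s⟫| ≤ k * ‖y - s‖ ^ 2)
    (T : E →L[ℝ] E) (hT : HasFDerivWithinAt P T S x)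
    (hd : ∀ η > (0 : ℝ), ∃ δ > (0 : ℝ), ∀ h : E, ‖h‖ < δ → ∃ s ∈ S, ‖s - (x + h)‖ ≤ η * ‖h‖) :
    ∀ η > (0 : ℝ), ∃ δ > (0 : ℝ), ∀ h : E, ‖h‖ < δ →
      |U (x + h) - U x - ⟪P x, h⟫ - 1 / 2 * ⟪T h, h⟫| ≤ η * ‖h‖ ^ 2 := by
  intro η hη
  obtain ⟨N, hN⟩ := exists_nat_gt ((2 * ‖T‖ + 5 * k) / (η / 2) + 1)
  have hN1 : (1 : ℝ) < N := lt_of_le_of_lt (by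
    have : 0 ≤ (2 * ‖T‖ + 5 * k) / (η / 2) := by positivity
    linarith) hN
  have hN0 : (0 : ℝ) < N := by linarith
  set e : ℝ := 1 / N with he
  have he0 : 0 < e := by positivity
  have he1 : e ≤ 1 := by rw [he, div_le_one hN0]; exact hN1.le
  have hC : (2 * ‖T‖ + 5 * k) * e ≤ η / 2 := by
    rw [he, mul_one_div, div_le_iff₀ hN0]
    have : (2 * ‖T‖ + 5 * k) / (η / 2) ≤ N := by linarith
    rw [div_le_iff₀ (by positivity)] at this
    linarith
  have h1 := hT.isLittleO.def (show (0 : ℝ) < η / 4 by positivity)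
  obtain ⟨δ1, hδ1, h1⟩ := mem_nhdsWithin_iff.1 h1
  obtain ⟨δ2, hδ2, h2⟩ := hd e he0
  refine ⟨min δ2 (δ1 / 2), by positivity, fun h hh => ?_⟩
  have hh2 : ‖h‖ < δ2 := hh.trans_le (min_le_left _ _)
  have hh1 : ‖h‖ < δ1 / 2 := hh.trans_le (min_le_right _ _)
  have key : ∀ j : ℕ, j ≤ N →
      |(U (x + (j * e : ℝ) • h) - ⟪P x, (j * e : ℝ) • h⟫ - (j * e : ℝ) ^ 2 / 2 * ⟪T h, h⟫) - U x|
        ≤ j * e * (η * ‖h‖ ^ 2) := by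
    intro j
    induction j with
    | zero => intro _; simp
    | succ j ih =>
      intro hj
      have ih' := ih (by omega)
      set τ : ℝ := j * e with hτ
      have hτ0 : 0 ≤ τ := by positivity
      have hτ1 : τ ≤ 1 := by
        rw [hτ, he, mul_one_div, div_le_one hN0]
        exact_mod_cast (by omega : j ≤ N)
      have hle : ‖τ • h‖ ≤ ‖h‖ := by
        rw [norm_smul, Real.norm_of_nonneg hτ0]
        exact mul_le_of_le_one_left (norm_nonneg _) hτ1
      obtain ⟨s, hsS, hs⟩ := h2 (τ • h) (hle.trans_lt hh2)
      have hs' : ‖s - (x + τ • h)‖ ≤ e * ‖h‖ := hs.trans (by gcongr)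
      have hs2 : ‖s - x‖ ≤ 2 * ‖h‖ := by
        have : s - x = (s - (x + τ • h)) + τ • h := by module
        rw [this]
        refine (norm_add_le _ _).trans ?_
        nlinarith [norm_nonneg h]
      have hP := h1 ⟨by rw [mem_ball_iff_norm]; linarith, hsS⟩
      have st := sa_step U k hk x s h (P x) (P s) T τ e (η / 4) he0.le (by positivity) (hU s hsS)
        hs' hs2 hP
      have ee : ((j + 1 : ℕ) : ℝ) * e = τ + e := by push_cast; rw [hτ]; ring
      rw [ee]
      have fin : e * ((2 * (η / 4) + (2 * ‖T‖ + 5 * k) * e) * ‖h‖ ^ 2) ≤ e * (η * ‖h‖ ^ 2) := by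
        gcongr; linarith
      have st' := abs_le.1 (st.trans fin)
      have ih'' := abs_le.1 ih'
      have s1 := st'.1
      have s2 := st'.2
      have i1 := ih''.1
      have i2 := ih''.2
      rw [abs_le, add_mul]
      constructor <;> linarith
  have := key N le_rfl
  have hNe : (N : ℝ) * e = 1 := by rw [he]; field_simp
  rw [hNe, one_smul] at this
  calc _ = |U (x + h) - ⟪P x, h⟫ - 1 ^ 2 / 2 * ⟪T h, h⟫ - U x| := by congr 1; ring
    _ ≤ _ := by linarith

open scoped Pointwise in
lemma sa_density [FiniteDimensional ℝ E] [MeasurableSpace E] [BorelSpace E] (μ : Measure E)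
    [μ.IsAddHaarMeasure] (S : Set E) (x : E) (hx : x ∈ S)
    (h : Tendsto (fun r => μ (S ∩ closedBall x r) / μ (closedBall x r)) (𝓝[>] 0) (𝓝 1)) :
    ∀ η > (0 : ℝ), ∃ δ > (0 : ℝ), ∀ h : E, ‖h‖ < δ → ∃ s ∈ S, ‖s - (x + h)‖ ≤ η * ‖h‖ := by
  intro η hη
  have hc : IsCompact (sphere (0 : E) 1) := isCompact_sphere _ _
  obtain ⟨t, -, tfin, ht⟩ := finite_cover_balls_of_compact hc (half_pos hη)
  have ev : ∀ᶠ r in 𝓝[>] (0 : ℝ), ∀ c ∈ t, (S ∩ ({x} + r • ball c (η / 2))).Nonempty := by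
    rw [eventually_all_finite tfin]
    intro c _
    exact Measure.eventually_nonempty_inter_smul_of_density_one μ S x h _ measurableSet_ball
      (measure_ball_pos μ c (half_pos hη)).ne'
  obtain ⟨δ, hδ, hδ'⟩ := mem_nhdsGT_iff_exists_Ioo_subset.1 ev
  refine ⟨δ, hδ, fun h hh => ?_⟩
  by_cases h0 : h = 0
  · exact ⟨x, hx, by simp [h0]⟩
  have hp : 0 < ‖h‖ := norm_pos_iff.2 h0
  have hmem : (‖h‖⁻¹ • h) ∈ sphere (0 : E) 1 := by
    rw [mem_sphere_zero_iff_norm, norm_smul, norm_inv, norm_norm, inv_mul_cancel₀ hp.ne']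
  obtain ⟨c, hc, hcb⟩ := mem_iUnion₂.1 (ht hmem)
  obtain ⟨s, hsS, hs⟩ := hδ' (show ‖h‖ ∈ Ioo 0 δ from ⟨hp, hh⟩) c hc
  refine ⟨s, hsS, ?_⟩
  rw [singleton_add] at hs
  obtain ⟨w, ⟨b, hb, rfl⟩, rfl⟩ := hs
  have e1 : (x + ‖h‖ • b) - (x + h) = ‖h‖ • ((b - c) - (‖h‖⁻¹ • h - c)) := by
    rw [sub_sub_sub_cancel_right, smul_sub, smul_inv_smul₀ hp.ne']; abel
  change ‖(x + ‖h‖ • b) - (x + h)‖ ≤ _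
  rw [e1, norm_smul, norm_norm, mul_comm]
  gcongr
  refine (norm_sub_le _ _).trans ?_
  rw [mem_ball_iff_norm] at hb hcb
  linarith

lemma sa_sharp (K : Set E) (hK : IsCompact K) (f g : E → ℝ) (hf : UpperSemicontinuousOn f K)
    (hg : UpperSemicontinuousOn g K) (c : ℝ) (hfr : ∀ x ∈ frontier K, f x + g x < c) :
    ∃ k0 : ℝ, ∀ k ≥ k0, ∀ y ∈ K, ∀ z ∈ K, (y ∈ frontier K ∨ z ∈ frontier K) →
      f y + g z - k / 2 * ‖y - z‖ ^ 2 < c := by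
  have hfK : frontier K ⊆ K := hK.isClosed.frontier_subset
  have hfc : IsCompact (frontier K) := hK.of_isClosed_subset isClosed_frontier hfK
  have hG : UpperSemicontinuousOn (fun q : E × E => f q.1 + g q.2) (K ×ˢ K) :=
    (hf.comp continuousOn_fst (fun q hq => hq.1)).add (hg.comp continuousOn_snd (fun q hq => hq.2))
  obtain ⟨M, hM⟩ := hG.bddAbove_of_isCompact (hK.prod hK)
  set K' : Set (E × E) := (frontier K ×ˢ K) ∪ (K ×ˢ frontier K) with hK'
  have hK'c : IsCompact K' := (hfc.prod hK).union (hK.prod hfc)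
  have hsub : K' ⊆ K ×ˢ K := union_subset (prod_mono hfK le_rfl) (prod_mono le_rfl hfK)
  have main : ∃ k0 : ℝ, ∀ k ≥ k0, ∀ q ∈ K', q ∈ K' → f q.1 + g q.2 - k / 2 * ‖q.1 - q.2‖ ^ 2 < c := by
    refine hK'c.induction_on (p := fun A => ∃ k0 : ℝ, ∀ k ≥ k0, ∀ q ∈ A, q ∈ K' →
      f q.1 + g q.2 - k / 2 * ‖q.1 - q.2‖ ^ 2 < c) ⟨0, by simp⟩ ?_ ?_ ?_
    · rintro s t hst ⟨k0, h⟩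
      exact ⟨k0, fun k hk q hq => h k hk q (hst hq)⟩
    · rintro s t ⟨k0, h⟩ ⟨k1, h'⟩
      refine ⟨max k0 k1, fun k hk q hq => ?_⟩
      rcases hq with hq | hq
      · exact h k ((le_max_left _ _).trans hk) q hq
      · exact h' k ((le_max_right _ _).trans hk) q hq
    · rintro ⟨y, z⟩ hq
      by_cases hyz : y = z
      · subst hyz
        have hy : y ∈ frontier K := by
          rcases hq with hq | hq
          · exact hq.1
          · exact hq.2
        have ev := hG (y, y) (hsub hq) c (hfr y hy)
        refine ⟨_, nhdsWithin_mono _ hsub ev, 0, fun k hk q hq _ => ?_⟩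
        have h1 : f q.1 + g q.2 < c := hq
        have : 0 ≤ k / 2 * ‖q.1 - q.2‖ ^ 2 := by
          have : 0 ≤ k := hk
          positivity
        linarith
      · have hp : 0 < ‖y - z‖ := norm_pos_iff.2 (sub_ne_zero.2 hyz)
        have ev : ∀ᶠ q : E × E in 𝓝 (y, z), ‖y - z‖ / 2 < ‖q.1 - q.2‖ := by
          have hc : ContinuousAt (fun q : E × E => ‖q.1 - q.2‖) (y, z) := by fun_prop
          exact hc.eventually (lt_mem_nhds (show ‖y - z‖ / 2 < ‖y - z‖ by linarith))
        refine ⟨_, mem_nhdsWithin_of_mem_nhds ev,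
          2 * (|M - c| + 1) / (‖y - z‖ / 2) ^ 2, fun k hk q hq hq' => ?_⟩
        have h1 : ‖y - z‖ / 2 < ‖q.1 - q.2‖ := hq
        have h2 : f q.1 + g q.2 ≤ M := hM ⟨q, hsub hq', rfl⟩
        have hk' : 2 * (|M - c| + 1) ≤ k * (‖y - z‖ / 2) ^ 2 := (div_le_iff₀ (by positivity)).1 hk
        have hk0 : 0 ≤ k := le_trans (by positivity) hk
        have h3 : k * (‖y - z‖ / 2) ^ 2 ≤ k * ‖q.1 - q.2‖ ^ 2 := by gcongr
        have := le_abs_self (M - c)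
        linarith
  obtain ⟨k0, h⟩ := main
  refine ⟨k0, fun k hk y hy z hz hyz => ?_⟩
  have hm : (y, z) ∈ K' := by
    rcases hyz with h | h
    · exact Or.inl ⟨h, hz⟩
    · exact Or.inr ⟨hy, h⟩
  exact h k hk (y, z) hm hm

lemma sa_conv (K : Set E) (hK : IsCompact K) (hne : K.Nonempty) (f : E → ℝ)
    (hf : UpperSemicontinuousOn f K) (k : ℝ) :
    ∃ (U : E → ℝ) (Y : E → E), (∀ x, Y x ∈ K) ∧ (∀ x, U x = f (Y x) - k * ‖x - Y x‖ ^ 2) ∧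
      (∀ x, ∀ y ∈ K, f y - k * ‖x - y‖ ^ 2 ≤ U x) ∧
      (∀ x y, U x + ⟪(2 * k) • (Y x - x), y - x⟫ - k * ‖y - x‖ ^ 2 ≤ U y) := by
  have : ∀ x, ∃ y ∈ K, ∀ y' ∈ K, f y' - k * ‖x - y'‖ ^ 2 ≤ f y - k * ‖x - y‖ ^ 2 := by
    intro x
    have hc : ContinuousOn (fun y => - (k * ‖x - y‖ ^ 2)) K := by fun_prop
    obtain ⟨y, hy, hmax⟩ := (hf.add hc.upperSemicontinuousOn).exists_isMaxOn hne hK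
    refine ⟨y, hy, fun y' hy' => ?_⟩
    have := hmax hy'
    simp only [mem_ofPred_eq] at this
    linarith
  choose Y hY hY' using this
  refine ⟨fun x => f (Y x) - k * ‖x - Y x‖ ^ 2, Y, hY, fun _ => rfl, fun x y hy => hY' x y hy, ?_⟩
  intro x y
  have h := hY' y (Y x) (hY x)
  have e : y - Y x = (y - x) - (Y x - x) := by abel
  rw [e, norm_sub_sq_real] at h
  beta_reduce
  rw [inner_smul_left, norm_sub_rev x (Y x), real_inner_comm]
  simp only [conj_trivial]
  linarith

lemma sa_zero (d : E) (C : ℝ) (hC : 0 ≤ C) (h : ∀ v, ⟪d, v⟫ ≤ C * ‖v‖ ^ 2) : d = 0 := by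
  by_contra hd
  have hp : 0 < ‖d‖ ^ 2 := by have := norm_pos_iff.2 hd; positivity
  have ht : 0 < 1 / (C + 1) := by positivity
  have := h ((1 / (C + 1)) • d)
  rw [inner_smul_right, real_inner_self_eq_norm_sq, norm_smul, Real.norm_of_nonneg ht.le,
    mul_pow] at this
  have h2 : C * ((1 / (C + 1)) ^ 2 * ‖d‖ ^ 2) = (1 / (C + 1)) * ‖d‖ ^ 2 * (C * (1 / (C + 1))) := by ring
  rw [h2] at this
  have h3 : C * (1 / (C + 1)) < 1 := by
    rw [mul_one_div, div_lt_one (by positivity)]; linarith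
  have h4 : 0 < (1 / (C + 1)) * ‖d‖ ^ 2 := by positivity
  nlinarith

lemma sa_ident (k : ℝ) (x y z q : E) :
    k * ‖x - y‖ ^ 2 + k * ‖x - z‖ ^ 2 + 4 * k * ⟪q, x⟫ =
      2 * k * ‖x - (1 / 2 : ℝ) • (y + z) + q‖ ^ 2 + k / 2 * ‖y - z‖ ^ 2 + 2 * k * ⟪q, y + z⟫
        - 2 * k * ‖q‖ ^ 2 := by
  simp only [← real_inner_self_eq_norm_sq, inner_sub_left, inner_sub_right, inner_add_left,
    inner_add_right, inner_smul_left, inner_smul_right, conj_trivial]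
  rw [real_inner_comm x y, real_inner_comm x z, real_inner_comm x q, real_inner_comm y z,
    real_inner_comm y q, real_inner_comm z q]
  ring

lemma sa_surj (K : Set E) (hK : IsCompact K) (hne : K.Nonempty) (f g : E → ℝ)
    (hf : UpperSemicontinuousOn f K) (hg : UpperSemicontinuousOn g K) (k : ℝ) (hk : 0 < k)
    (U V : E → ℝ) (Y Z : E → E) (hY : ∀ x, Y x ∈ K) (hZ : ∀ x, Z x ∈ K)
    (hU : ∀ x, U x = f (Y x) - k * ‖x - Y x‖ ^ 2) (hV : ∀ x, V x = g (Z x) - k * ‖x - Z x‖ ^ 2)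
    (hU' : ∀ x, ∀ y ∈ K, f y - k * ‖x - y‖ ^ 2 ≤ U x)
    (hV' : ∀ x, ∀ y ∈ K, g y - k * ‖x - y‖ ^ 2 ≤ V x) (p : E) :
    ∃ x, ∀ y, U y + V y ≤ U x + V x + ⟪p, y - x⟫ := by
  set q : E := (1 / (4 * k)) • p with hq
  have hpq : p = (4 * k) • q := by rw [hq, smul_smul, mul_one_div_cancel (by positivity), one_smul]
  have hG : UpperSemicontinuousOn (fun w : E × E => f w.1 + g w.2) (K ×ˢ K) :=
    (hf.comp continuousOn_fst (fun q hq => hq.1)).add (hg.comp continuousOn_snd (fun q hq => hq.2))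
  have hc : ContinuousOn (fun w : E × E => - (k / 2 * ‖w.1 - w.2‖ ^ 2 + 2 * k * ⟪q, w.1 + w.2⟫))
      (K ×ˢ K) := by fun_prop
  obtain ⟨⟨y, z⟩, hyz, hmax⟩ := (hG.add hc.upperSemicontinuousOn).exists_isMaxOn
    (hne.prod hne) (hK.prod hK)
  refine ⟨(1 / 2 : ℝ) • (y + z) - q, fun x' => ?_⟩
  set x := (1 / 2 : ℝ) • (y + z) - q with hx
  have h1 := sa_ident k x y z q
  have h2 := sa_ident k x' (Y x') (Z x') q
  have hz : x - (1 / 2 : ℝ) • (y + z) + q = 0 := by rw [hx]; abel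
  rw [hz, norm_zero] at h1
  have h3 := hmax (show (Y x', Z x') ∈ K ×ˢ K from ⟨hY x', hZ x'⟩)
  simp only [mem_ofPred_eq] at h3
  have h4 := hU' x y hyz.1
  have h5 := hV' x z hyz.2
  rw [hU x', hV x', hpq, inner_smul_left, inner_sub_right]
  simp only [conj_trivial]
  have h6 : 0 ≤ 2 * k * ‖x' - (1 / 2 : ℝ) • (Y x' + Z x') + q‖ ^ 2 := by positivity
  linarith

lemma sa_int (k : ℝ) (hk : 1 ≤ k) (x x0 y z : E) (r D A B c0 : ℝ) (hr0 : 0 ≤ r) (hr1 : r ≤ 1)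
    (hD : ‖y - x0‖ ≤ D) (hD2 : ‖z - x0‖ ≤ D)
    (hp : ‖(2 * k) • (y - x) + (2 * k) • (z - x)‖ ≤ r)
    (h : c0 ≤ A - k * ‖x - y‖ ^ 2 + (B - k * ‖x - z‖ ^ 2) +
      ⟪(2 * k) • (y - x) + (2 * k) • (z - x), x0 - x⟫) :
    c0 - r * (1 + D) ≤ A + B - k / 2 * ‖y - z‖ ^ 2 := by
  set q : E := (1 / 2 : ℝ) • (y + z) - x with hq
  have hpq : (2 * k) • (y - x) + (2 * k) • (z - x) = (4 * k) • q := by rw [hq]; module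
  have h1 := sa_ident k x y z q
  have hz : x - (1 / 2 : ℝ) • (y + z) + q = 0 := by rw [hq]; abel
  rw [hz, norm_zero] at h1
  rw [hpq] at h hp
  have e : x0 - x = - ((1 / 2 : ℝ) • ((y - x0) + (z - x0))) + q := by rw [hq]; module
  have h2 : ⟪(4 * k) • q, - ((1 / 2 : ℝ) • ((y - x0) + (z - x0)))⟫ ≤ r * D := by
    refine (real_inner_le_norm _ _).trans ?_
    have : ‖- ((1 / 2 : ℝ) • ((y - x0) + (z - x0)))‖ ≤ D := by
      rw [norm_neg, norm_smul, Real.norm_of_nonneg (by norm_num)]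
      have := norm_add_le (y - x0) (z - x0)
      linarith
    gcongr
  rw [e, inner_add_right] at h
  have h3 : ⟪(4 * k) • q, q⟫ = 4 * k * ‖q‖ ^ 2 := by
    rw [inner_smul_left, real_inner_self_eq_norm_sq]; simp
  have h4 : 2 * k * ‖q‖ ^ 2 ≤ r := by
    rw [norm_smul, Real.norm_of_nonneg (by positivity)] at hp
    have : ‖q‖ ≤ 1 := by nlinarith [norm_nonneg q]
    nlinarith [norm_nonneg q, mul_nonneg (by linarith : 0 ≤ k) (norm_nonneg q)]
  have h5 : (2 : ℝ) * k * ⟪q, y + z⟫ = 4 * k * ⟪q, x⟫ + 4 * k * ‖q‖ ^ 2 := by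
    have : y + z = (2 : ℝ) • x + (2 : ℝ) • q := by rw [hq]; module
    rw [this, inner_add_right, inner_smul_right, inner_smul_right, real_inner_self_eq_norm_sq]
    ring
  nlinarith

lemma sa_touch (K : Set E) (f : E → ℝ) (k : ℝ) (U : E → ℝ) (x y : E) (hy : y ∈ interior K)
    (hU : U x = f y - k * ‖x - y‖ ^ 2) (hU' : ∀ x, ∀ y ∈ K, f y - k * ‖x - y‖ ^ 2 ≤ U x)
    (P : E) (T : E →L[ℝ] E)
    (h : ∀ η > (0 : ℝ), ∃ δ > (0 : ℝ), ∀ h : E, ‖h‖ < δ →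
      |U (x + h) - U x - ⟪P, h⟫ - 1 / 2 * ⟪T h, h⟫| ≤ η * ‖h‖ ^ 2) :
    ∀ η > (0 : ℝ), ∃ δ > (0 : ℝ), ∀ h : E, ‖h‖ < δ →
      f (y + h) ≤ f y + ⟪P, h⟫ + 1 / 2 * ⟪T h, h⟫ + η * ‖h‖ ^ 2 := by
  intro η hη
  obtain ⟨δ, hδ, h⟩ := h η hη
  obtain ⟨ρ, hρ, hb⟩ := Metric.mem_nhds_iff.1 (mem_interior_iff_mem_nhds.1 hy)
  refine ⟨min δ ρ, by positivity, fun v hv => ?_⟩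
  have h1 := (abs_le.1 (h v (hv.trans_le (min_le_left _ _)))).2
  have h2 : y + v ∈ K := hb (by
    rw [mem_ball_iff_norm, add_sub_cancel_left]; exact hv.trans_le (min_le_right _ _))
  have h3 := hU' (x + v) (y + v) h2
  rw [add_sub_add_right_eq_sub] at h3
  linarith

lemma sa_core [FiniteDimensional ℝ E] [MeasurableSpace E] [BorelSpace E]
    (K : Set E) (hK : IsCompact K) (f g : E → ℝ) (hf : UpperSemicontinuousOn f K)
    (hg : UpperSemicontinuousOn g K) (c : ℝ) (hfr : ∀ x ∈ frontier K, f x + g x < c)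
    (x0 : E) (hx0 : x0 ∈ K) (h0 : c < f x0 + g x0) :
    ∃ y ∈ interior K, ∃ z ∈ interior K, c ≤ f y + g z ∧ ∃ (P Q : E) (T R : E →L[ℝ] E),
      (∀ h, ⟪T h, h⟫ + ⟪R h, h⟫ ≤ 0) ∧
      (∀ η > (0 : ℝ), ∃ δ > (0 : ℝ), ∀ h : E, ‖h‖ < δ →
        f (y + h) ≤ f y + ⟪P, h⟫ + 1 / 2 * ⟪T h, h⟫ + η * ‖h‖ ^ 2) ∧
      (∀ η > (0 : ℝ), ∃ δ > (0 : ℝ), ∀ h : E, ‖h‖ < δ →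
        g (z + h) ≤ g z + ⟪Q, h⟫ + 1 / 2 * ⟪R h, h⟫ + η * ‖h‖ ^ 2) := by
  have hne : K.Nonempty := ⟨x0, hx0⟩
  obtain ⟨D, hD⟩ := hK.isBounded.subset_closedBall x0
  have hD' : ∀ y ∈ K, ‖y - x0‖ ≤ D := fun y hy => mem_closedBall_iff_norm.1 (hD hy)
  have hD0 : 0 ≤ D := (norm_nonneg _).trans (hD' x0 hx0)
  obtain ⟨k0, hk0⟩ := sa_sharp K hK f g hf hg c hfr
  set k := max k0 1 with hk
  have hk1 : 1 ≤ k := le_max_right _ _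
  have hkp : 0 < k := by linarith
  replace hk0 := hk0 k (le_max_left _ _)
  obtain ⟨U, Y, hYK, hU, hU', hUl⟩ := sa_conv K hK hne f hf k
  obtain ⟨V, Z, hZK, hV, hV', hVl⟩ := sa_conv K hK hne g hg k
  set P : E → E := fun x => (2 * k) • (Y x - x) with hP
  set Q : E → E := fun x => (2 * k) • (Z x - x) with hQ
  set r : ℝ := min 1 ((f x0 + g x0 - c) / (1 + D)) with hr
  have hr0 : 0 < r := by
    have : 0 < f x0 + g x0 - c := by linarith
    positivity
  have hr1 : r ≤ 1 := min_le_left _ _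
  have hr2 : r * (1 + D) ≤ f x0 + g x0 - c :=
    (le_div_iff₀ (by positivity)).1 (min_le_right _ _)
  set S : Set E := {x | (∀ y, U y + V y ≤ U x + V x + ⟪P x + Q x, y - x⟫) ∧ ‖P x + Q x‖ ≤ r} with hS
  -- surjectivity
  have hsurj : ball (0 : E) r ⊆ (fun x => P x + Q x) '' S := by
    intro p hp
    obtain ⟨x, hx⟩ := sa_surj K hK hne f g hf hg k hkp U V Y Z hYK hZK hU hV hU' hV' p
    have hz : P x + Q x - p = 0 := by
      refine sa_zero _ (2 * k) (by positivity) fun v => ?_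
      have a1 := hx (x + v)
      have a2 := hUl x (x + v)
      have a3 := hVl x (x + v)
      rw [add_sub_cancel_left] at a1 a2 a3
      rw [inner_sub_left, inner_add_left]
      change U x + ⟪P x, v⟫ - _ ≤ _ at a2
      change V x + ⟪Q x, v⟫ - _ ≤ _ at a3
      linarith
    have hz' : P x + Q x = p := sub_eq_zero.1 hz
    refine ⟨x, ⟨?_, ?_⟩, hz'⟩
    · rw [hz']; exact hx
    · rw [hz']; exact (mem_ball_zero_iff.1 hp).le
  -- two-sided bounds
  have hU2 : ∀ s ∈ S, ∀ y, |U y - U s - ⟪P s, y - s⟫| ≤ k * ‖y - s‖ ^ 2 := by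
    intro s hs y
    have a1 := hs.1 y
    have a2 := hUl s y
    have a3 := hVl s y
    change U s + ⟪P s, y - s⟫ - _ ≤ _ at a2
    change V s + ⟪Q s, y - s⟫ - _ ≤ _ at a3
    rw [inner_add_left] at a1
    rw [abs_le]; constructor <;> linarith
  have hV2 : ∀ s ∈ S, ∀ y, |V y - V s - ⟪Q s, y - s⟫| ≤ k * ‖y - s‖ ^ 2 := by
    intro s hs y
    have a1 := hs.1 y
    have a2 := hUl s y
    have a3 := hVl s y
    change U s + ⟪P s, y - s⟫ - _ ≤ _ at a2
    change V s + ⟪Q s, y - s⟫ - _ ≤ _ at a3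
    rw [inner_add_left] at a1
    rw [abs_le]; constructor <;> linarith
  have hlip : ∀ (U : E → ℝ) (P : E → E),
      (∀ s ∈ S, ∀ y, |U y - U s - ⟪P s, y - s⟫| ≤ k * ‖y - s‖ ^ 2) →
      LipschitzOnWith (6 * k).toNNReal P S := by
    intro U P h
    refine LipschitzOnWith.of_dist_le_mul fun x hx y hy => ?_
    rw [Real.coe_toNNReal _ (by positivity), dist_eq_norm, dist_eq_norm]
    by_cases hxy : x = y
    · simp [hxy]
    · exact sa_lip U k hkp.le x y _ _ hxy (h x hx) (h y hy)
  have hPl := hlip U P hU2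
  have hQl := hlip V Q hV2
  let μ : Measure E := MeasureTheory.Measure.hausdorffMeasure (Module.finrank ℝ E : ℝ)
  haveI : μ.IsAddHaarMeasure := MeasureTheory.isAddHaarMeasure_hausdorffMeasure
  have hSpos : μ S ≠ 0 := by
    intro hS0
    have h1 := (hPl.add hQl).hausdorffMeasure_image_le (d := (Module.finrank ℝ E : ℝ)) (by positivity)
    have h2 : μ (ball (0 : E) r) ≤ _ := (measure_mono hsurj).trans h1
    change _ ≤ _ * μ S at h2
    rw [hS0, mul_zero] at h2
    exact (measure_ball_pos μ (0 : E) hr0).ne' (le_antisymm h2 bot_le)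
  have ae1 := hPl.ae_differentiableWithinAt_of_mem (μ := μ)
  have ae2 := hQl.ae_differentiableWithinAt_of_mem (μ := μ)
  have ae3 := ae_imp_of_ae_restrict (Besicovitch.ae_tendsto_measure_inter_div μ S)
  obtain ⟨x, hxS, hx1, hx2, hx3⟩ : ∃ x ∈ S, DifferentiableWithinAt ℝ P S x ∧
      DifferentiableWithinAt ℝ Q S x ∧
      Tendsto (fun r => μ (S ∩ closedBall x r) / μ (closedBall x r)) (𝓝[>] 0) (𝓝 1) := by
    by_contra hcon
    push Not at hcon
    apply hSpos
    rw [measure_eq_zero_iff_ae_notMem]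
    filter_upwards [ae1, ae2, ae3] with x a1 a2 a3 hxS
    exact hcon x hxS (a1 hxS) (a2 hxS) (a3 hxS)
  have hdens := sa_density μ S x hxS hx3
  have eU := sa_expand S x U P k hkp.le hU2 _ hx1.hasFDerivWithinAt hdens
  have eV := sa_expand S x V Q k hkp.le hV2 _ hx2.hasFDerivWithinAt hdens
  set T := fderivWithin ℝ P S x
  set R := fderivWithin ℝ Q S x
  have hint : c ≤ f (Y x) + g (Z x) - k / 2 * ‖Y x - Z x‖ ^ 2 := by
    have b1 := hxS.1 x0
    have b2 := hU' x0 x0 hx0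
    have b3 := hV' x0 x0 hx0
    rw [sub_self, norm_zero] at b2 b3
    have := sa_int k hk1 x x0 (Y x) (Z x) r D (f (Y x)) (g (Z x)) (f x0 + g x0) hr0.le hr1
      (hD' _ (hYK x)) (hD' _ (hZK x)) hxS.2 (by
        rw [← hU x, ← hV x]
        change _ ≤ U x + V x + ⟪P x + Q x, x0 - x⟫
        linarith)
    linarith
  have hnf : ¬ (Y x ∈ frontier K ∨ Z x ∈ frontier K) := fun hh =>
    absurd (hk0 _ (hYK x) _ (hZK x) hh) (not_lt.2 hint)
  rw [hK.isClosed.frontier_eq] at hnf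
  have hyi : Y x ∈ interior K := by
    by_contra hh; exact hnf (Or.inl ⟨hYK x, hh⟩)
  have hzi : Z x ∈ interior K := by
    by_contra hh; exact hnf (Or.inr ⟨hZK x, hh⟩)
  refine ⟨Y x, hyi, Z x, hzi, ?_, P x, Q x, T, R, ?_, ?_, ?_⟩
  · have : 0 ≤ k / 2 * ‖Y x - Z x‖ ^ 2 := by positivity
    linarith
  · intro h
    by_contra hcon
    push Not at hcon
    have hh0 : h ≠ 0 := by rintro rfl; simp at hcon
    have hhp : 0 < ‖h‖ := norm_pos_iff.2 hh0
    set σ := ⟪T h, h⟫ + ⟪R h, h⟫ with hσ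
    set η := σ / (8 * ‖h‖ ^ 2) with hη
    have hη0 : 0 < η := by positivity
    obtain ⟨δ1, hδ1, e1⟩ := eU η hη0
    obtain ⟨δ2, hδ2, e2⟩ := eV η hη0
    set t : ℝ := min δ1 δ2 / (2 * ‖h‖) with ht
    have hm : 0 < min δ1 δ2 := lt_min hδ1 hδ2
    have ht0 : 0 < t := by positivity
    have hth : ‖t • h‖ < min δ1 δ2 := by
      rw [norm_smul, Real.norm_of_nonneg ht0.le, ht]
      have : min δ1 δ2 / (2 * ‖h‖) * ‖h‖ = min δ1 δ2 / 2 := by field_simp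
      rw [this]; linarith
    have f1 := (abs_le.1 (e1 (t • h) (hth.trans_le (min_le_left _ _)))).1
    have f2 := (abs_le.1 (e2 (t • h) (hth.trans_le (min_le_right _ _)))).1
    have f3 := hxS.1 (x + t • h)
    rw [add_sub_cancel_left, inner_add_left] at f3
    simp only [map_smul, inner_smul_left, inner_smul_right, conj_trivial, norm_smul,
      Real.norm_of_nonneg ht0.le] at f1 f2 f3
    have f4 : η * (t * ‖h‖) ^ 2 = t ^ 2 * σ / 8 := by rw [hη]; field_simp
    rw [f4] at f1 f2
    have f5 : 0 < t ^ 2 * σ := by positivity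
    have f6 : t ^ 2 * σ = t * (t * ⟪T h, h⟫) + t * (t * ⟪R h, h⟫) := by rw [hσ]; ring
    linarith
  · exact sa_touch K f k U x (Y x) hyi (hU x) hU' (P x) T eU
  · exact sa_touch K g k V x (Z x) hzi (hV x) hV' (Q x) R eV

end SA

lemma sa_bilin {n : ℕ} (M : Matrix (Fin n) (Fin n) ℝ) (v w : Euc n) :
    bilin M v w = ⟪Matrix.toEuclideanCLM (𝕜 := ℝ) M w, v⟫ := by
  simp only [bilin, PiLp.inner_apply, Matrix.ofLp_toEuclideanCLM, Matrix.mulVec, dotProduct]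
  refine Finset.sum_congr rfl fun i _ => ?_
  simp only [RCLike.inner_apply, conj_trivial, Finset.mul_sum]
  refine Finset.sum_congr rfl fun j _ => ?_
  ring

lemma sa_bilin_symm {n : ℕ} (A : SymMat n) (v w : Euc n) :
    bilin (A : Matrix (Fin n) (Fin n) ℝ) v w = bilin (A : Matrix (Fin n) (Fin n) ℝ) w v := by
  unfold bilin
  rw [Finset.sum_comm]
  refine Finset.sum_congr rfl fun i _ => Finset.sum_congr rfl fun j _ => ?_
  have h : (A : Matrix (Fin n) (Fin n) ℝ) j i = (A : Matrix (Fin n) (Fin n) ℝ) i j := by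
    have h2 : star (A : Matrix (Fin n) (Fin n) ℝ) = A := selfAdjoint.mem_iff.1 A.2
    have h3 : star (A : Matrix (Fin n) (Fin n) ℝ) i j = (A : Matrix (Fin n) (Fin n) ℝ) i j := by
      rw [h2]
    rw [Matrix.star_apply, star_trivial] at h3
    exact h3
  rw [h]; ring

lemma sa_bilin_single {n : ℕ} (M : Matrix (Fin n) (Fin n) ℝ) (i j : Fin n) :
    bilin M (EuclideanSpace.single i 1) (EuclideanSpace.single j 1) = M i j := by
  unfold bilin
  rw [Finset.sum_eq_single i, Finset.sum_eq_single j]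
  · simp
  · intro b _ hb; simp [hb]
  · simp
  · intro b _ hb; simp [hb]
  · simp

lemma sa_bilin_one {n : ℕ} (v : Euc n) :
    bilin (symOne n : Matrix (Fin n) (Fin n) ℝ) v v = ‖v‖ ^ 2 := by
  rw [sa_bilin]
  simp [symOne]

lemma sa_bilin_add {n : ℕ} (A B : Matrix (Fin n) (Fin n) ℝ) (v w : Euc n) :
    bilin (A + B) v w = bilin A v w + bilin B v w := by
  simp [sa_bilin, inner_add_left]

lemma sa_bilin_smul {n : ℕ} (c : ℝ) (A : Matrix (Fin n) (Fin n) ℝ) (v w : Euc n) :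
    bilin (c • A) v w = c * bilin A v w := by
  simp [sa_bilin, inner_smul_left]

lemma sa_hess {n : ℕ} (A : SymMat n) (l : Euc n →L[ℝ] ℝ) (y : Euc n) :
    ContDiff ℝ 2 (fun x : Euc n => l (x - y) + 1 / 2 * bilin (A : Matrix (Fin n) (Fin n) ℝ) (x - y) (x - y)) ∧
    ∀ x, hessMat (fun x : Euc n => l (x - y) + 1 / 2 * bilin (A : Matrix (Fin n) (Fin n) ℝ) (x - y) (x - y)) x
      = (A : Matrix (Fin n) (Fin n) ℝ) := by
  set L := Matrix.toEuclideanCLM (𝕜 := ℝ) (A : Matrix (Fin n) (Fin n) ℝ) with hL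
  have hfun : (fun x : Euc n => l (x - y) + 1 / 2 * bilin (A : Matrix (Fin n) (Fin n) ℝ) (x - y) (x - y))
      = fun x : Euc n => l (x - y) + 1 / 2 * ⟪L (x - y), x - y⟫ := by
    funext x; rw [sa_bilin]
  rw [hfun]
  refine ⟨?_, fun x => ?_⟩
  · have hs : ContDiff ℝ 2 (fun x : Euc n => x - y) := contDiff_id.sub contDiff_const
    exact (l.contDiff.comp hs).add (contDiff_const.mul ((L.contDiff.comp hs).inner ℝ hs))
  have hsym : ∀ v w, ⟪L v, w⟫ = ⟪L w, v⟫ := fun v w => by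
    rw [hL, ← sa_bilin, ← sa_bilin, sa_bilin_symm]
  have hd : ∀ x, HasFDerivAt (fun x : Euc n => l (x - y) + 1 / 2 * ⟪L (x - y), x - y⟫)
      (l + innerSL ℝ (L (x - y))) x := by
    intro x
    have hs : HasFDerivAt (fun x : Euc n => x - y) (ContinuousLinearMap.id ℝ (Euc n)) x :=
      (hasFDerivAt_id x).sub_const y
    have h1 := l.hasFDerivAt.comp x hs
    have h2 := ((L.hasFDerivAt.comp x hs).inner ℝ hs).const_mul (1 / 2)
    refine (h1.add h2).congr_fderiv ?_
    ext v
    have a1 := hsym v (x - y)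
    have a2 := real_inner_comm v (L (x - y))
    change l v + (1 / 2) * (⟪L (x - y), v⟫ + ⟪L v, x - y⟫) = l v + ⟪L (x - y), v⟫
    linarith
  have hd' : fderiv ℝ (fun x : Euc n => l (x - y) + 1 / 2 * ⟪L (x - y), x - y⟫)
      = fun x => l + innerSL ℝ (L (x - y)) := funext fun x => (hd x).fderiv
  have hdd : HasFDerivAt (fun x : Euc n => l + innerSL ℝ (L (x - y))) ((innerSL ℝ).comp L) x := by
    have hs : HasFDerivAt (fun x : Euc n => x - y) (ContinuousLinearMap.id ℝ (Euc n)) x :=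
      (hasFDerivAt_id x).sub_const y
    have := (((innerSL ℝ (E := Euc n)).comp L).hasFDerivAt.comp x hs).const_add l
    exact this
  funext i j
  unfold hessMat
  rw [iteratedFDeriv_two_apply, hd', hdd.fderiv]
  simp only [Matrix.cons_val_zero, Matrix.cons_val_one]
  change ⟪L (EuclideanSpace.single i 1), EuclideanSpace.single j 1⟫ = _
  rw [hsym, hL, ← sa_bilin, sa_bilin_single]

lemma sa_visc {n : ℕ} (F : Set (SymMat n)) (hFc : IsClosed F) (X K : Set (Euc n)) (hKX : K ⊆ X)
    (u : Euc n → EReal) (hu : IsTypeF F X u) (f : Euc n → ℝ) (hf : ∀ x ∈ K, u x ≤ (f x : EReal))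
    (y : Euc n) (hy : y ∈ interior K) (huy : u y = (f y : EReal)) (A : SymMat n)
    (l : Euc n →L[ℝ] ℝ)
    (h : ∀ η > (0 : ℝ), ∃ δ > (0 : ℝ), ∀ h : Euc n, ‖h‖ < δ →
      f (y + h) ≤ f y + l h + 1 / 2 * bilin (A : Matrix (Fin n) (Fin n) ℝ) h h + η * ‖h‖ ^ 2) :
    A ∈ F := by
  by_contra hA
  have hcont : Continuous (fun s : ℝ => A + s • symOne n) := by
    refine continuous_induced_rng.2 ?_
    change Continuous (fun s : ℝ => (A : Matrix (Fin n) (Fin n) ℝ) + s • (symOne n : Matrix (Fin n) (Fin n) ℝ))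
    fun_prop
  have hev : ∀ᶠ s in 𝓝 (0 : ℝ), A + s • symOne n ∈ Fᶜ :=
    hcont.continuousAt.eventually (hFc.isOpen_compl.mem_nhds (by simpa using hA))
  obtain ⟨ε, hε, hev⟩ := Metric.eventually_nhds_iff.1 hev
  set η := ε / 8 with hη
  have hη0 : 0 < η := by positivity
  have hB : A + (4 * η) • symOne n ∉ F := hev (by
    rw [dist_zero_right, Real.norm_of_nonneg (by positivity), hη]; linarith)
  obtain ⟨δ, hδ, h⟩ := h η hη0
  obtain ⟨ρ, hρ, hb⟩ := Metric.mem_nhds_iff.1 (mem_interior_iff_mem_nhds.1 hy)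
  set r := min δ ρ / 2 with hr
  have hm : 0 < min δ ρ := lt_min hδ hρ
  have hr0 : 0 < r := by positivity
  have hrδ : r < δ := by have := min_le_left δ ρ; linarith
  have hrρ : r < ρ := by have := min_le_right δ ρ; linarith
  have hbK : closedBall y r ⊆ K := (closedBall_subset_ball hrρ).trans hb
  obtain ⟨hC2, hH⟩ := sa_hess (-(A + (4 * η) • symOne n)) (-l) y
  have key := hu _ ⟨hC2.contDiffOn, fun x _ => ⟨-(A + (4 * η) • symOne n), by
    change - -_ ∉ interior F
    rw [neg_neg]
    exact fun hh => hB (interior_subset hh), (hH x).symm⟩⟩ (closedBall y r)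
    (isCompact_closedBall y r) (hbK.trans hKX) (AffineMap.const ℝ (Euc n) (f y - η * r ^ 2)) ?_ y
    (mem_closedBall_self hr0.le)
  · simp only [huy, sub_self, AffineMap.const_apply] at key
    have hb0 : ∀ M : Matrix (Fin n) (Fin n) ℝ, bilin M 0 0 = 0 := fun M => by simp [bilin]
    rw [hb0, map_zero, ← EReal.coe_add, EReal.coe_le_coe_iff] at key
    have : 0 < η * r ^ 2 := by positivity
    linarith
  · intro x hx
    have hxs : ‖x - y‖ = r := by
      have := frontier_closedBall_subset_sphere hx
      rwa [mem_sphere_iff_norm] at this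
    have hxK : x ∈ K := hbK (by rw [mem_closedBall_iff_norm]; exact hxs.le)
    have h1 := h (x - y) (by rw [hxs]; exact hrδ)
    rw [add_sub_cancel] at h1
    refine (add_le_add (hf x hxK) le_rfl).trans ?_
    simp only [AffineMap.const_apply]
    rw [← EReal.coe_add, EReal.coe_le_coe_iff]
    have e : ((-(A + (4 * η) • symOne n) : SymMat n) : Matrix (Fin n) (Fin n) ℝ)
        = (-1 : ℝ) • ((A : Matrix (Fin n) (Fin n) ℝ) + (4 * η) • (symOne n : Matrix (Fin n) (Fin n) ℝ)) := by
      rw [neg_one_smul]; rfl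
    rw [e, sa_bilin_smul, sa_bilin_add, sa_bilin_smul, sa_bilin_one, hxs]
    rw [hxs] at h1
    simp only [neg_apply]
    linarith

lemma sa_interior {n : ℕ} (F : Set (SymMat n)) (hF : IsDirichletSet F) (A C : SymMat n)
    (hA : A ∈ F) (ε : ℝ) (hε : 0 < ε)
    (h : ∀ v : Euc n, bilin (A : Matrix (Fin n) (Fin n) ℝ) v v + ε * ‖v‖ ^ 2
      ≤ bilin (C : Matrix (Fin n) (Fin n) ℝ) v v) : C ∈ interior F := by
  rw [mem_interior_iff_mem_nhds]
  let Φ : Matrix (Fin n) (Fin n) ℝ →ₗ[ℝ] (Euc n →L[ℝ] Euc n) :=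
    (Matrix.toEuclideanCLM (n := Fin n) (𝕜 := ℝ)).toAlgEquiv.toLinearMap
  have hΦ : ∀ M v, Φ M v = Matrix.toEuclideanCLM (𝕜 := ℝ) M v := fun _ _ => rfl
  have hc : Continuous (fun B : SymMat n => Φ (B : Matrix (Fin n) (Fin n) ℝ)) :=
    (LinearMap.continuous_of_finiteDimensional Φ).comp continuous_subtype_val
  have hev : ∀ᶠ B : SymMat n in 𝓝 C, ‖Φ (B : Matrix (Fin n) (Fin n) ℝ) - Φ (C : Matrix (Fin n) (Fin n) ℝ)‖ < ε := by
    have := hc.continuousAt.eventually (Metric.ball_mem_nhds (Φ (C : Matrix (Fin n) (Fin n) ℝ)) hε)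
    filter_upwards [this] with B hB
    rwa [dist_eq_norm] at hB
  filter_upwards [hev] with B hB
  have hBA : B = A + (B - A) := by abel
  rw [hBA]
  refine hF.add_psd A hA _ ?_
  refine Matrix.PosSemidef.of_dotProduct_mulVec_nonneg ?_ ?_
  · exact selfAdjoint.mem_iff.1 (B - A).2
  · intro w
    set v : Euc n := WithLp.toLp 2 w with hv
    have e1 : star w ⬝ᵥ (((B - A : SymMat n) : Matrix (Fin n) (Fin n) ℝ).mulVec w)
        = bilin ((B - A : SymMat n) : Matrix (Fin n) (Fin n) ℝ) v v := by
      simp only [bilin, dotProduct, Matrix.mulVec, hv, Finset.mul_sum, Pi.star_apply, star_trivial]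
      refine Finset.sum_congr rfl fun i _ => Finset.sum_congr rfl fun j _ => ?_
      ring
    rw [e1]
    have e2 : ((B - A : SymMat n) : Matrix (Fin n) (Fin n) ℝ)
        = (B : Matrix (Fin n) (Fin n) ℝ) + (-1 : ℝ) • (A : Matrix (Fin n) (Fin n) ℝ) := by
      rw [neg_one_smul, ← sub_eq_add_neg]; rfl
    rw [e2, sa_bilin_add, sa_bilin_smul]
    have h1 := h v
    have h2 : |⟪(Φ (B : Matrix (Fin n) (Fin n) ℝ) - Φ (C : Matrix (Fin n) (Fin n) ℝ)) v, v⟫|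
        ≤ ε * ‖v‖ ^ 2 := by
      refine (abs_real_inner_le_norm _ _).trans ?_
      have := (ContinuousLinearMap.le_opNorm (Φ (B : Matrix (Fin n) (Fin n) ℝ) - Φ (C : Matrix (Fin n) (Fin n) ℝ)) v)
      calc _ ≤ (ε * ‖v‖) * ‖v‖ := by
            gcongr
            exact this.trans (by gcongr)
        _ = _ := by ring
    rw [sub_apply, inner_sub_left, hΦ, hΦ, ← sa_bilin, ← sa_bilin] at h2
    have := (abs_le.1 h2).1
    linarith

lemma sa_symMat {n : ℕ} (T : Euc n →L[ℝ] Euc n) :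
    ∃ A : SymMat n, ∀ v, bilin (A : Matrix (Fin n) (Fin n) ℝ) v v = ⟪T v, v⟫ := by
  set M := (Matrix.toEuclideanCLM (n := Fin n) (𝕜 := ℝ)).symm T with hM
  refine ⟨⟨(1 / 2 : ℝ) • (M + M.transpose), ?_⟩, fun v => ?_⟩
  · rw [selfAdjoint.mem_iff]
    ext i j
    simp [Matrix.star_apply]
    ring
  · have h1 : bilin M v v = ⟪T v, v⟫ := by
      rw [sa_bilin, hM, StarAlgEquiv.apply_symm_apply]
    have h2 : bilin M.transpose v v = bilin M v v := by
      unfold bilin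
      rw [Finset.sum_comm]
      refine Finset.sum_congr rfl fun i _ => Finset.sum_congr rfl fun j _ => ?_
      rw [Matrix.transpose_apply]; ring
    change bilin ((1 / 2 : ℝ) • (M + M.transpose)) v v = _
    rw [sa_bilin_smul, sa_bilin_add, h2, h1]; ring

lemma sa_coe_trunc (a : EReal) (ha : a ≠ ⊤) (N : ℝ) :
    (((max a ((-N : ℝ) : EReal)).toReal : ℝ) : EReal) = max a ((-N : ℝ) : EReal) := by
  apply EReal.coe_toReal
  · exact (max_lt (lt_top_iff_ne_top.2 ha) (EReal.coe_lt_top _)).ne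
  · exact (lt_of_lt_of_le (EReal.bot_lt_coe _) (le_max_right _ _)).ne'

lemma sa_trunc_usc {n : ℕ} (K : Set (Euc n)) (u : Euc n → EReal) (hu : UpperSemicontinuousOn u K)
    (hfin : ∀ x ∈ K, u x ≠ ⊤) (N : ℝ) :
    UpperSemicontinuousOn (fun x => (max (u x) ((-N : ℝ) : EReal)).toReal) K := by
  intro x hx b hb
  have hb' : max (u x) ((-N : ℝ) : EReal) < (b : EReal) := by
    rw [← sa_coe_trunc (u x) (hfin x hx) N]
    exact EReal.coe_lt_coe_iff.2 hb
  have h1 : u x < (b : EReal) := (le_max_left _ _).trans_lt hb'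
  have h2 : ((-N : ℝ) : EReal) < (b : EReal) := (le_max_right _ _).trans_lt hb'
  filter_upwards [hu x hx b h1, self_mem_nhdsWithin] with x' hx' hx'K
  rw [← EReal.coe_lt_coe_iff, sa_coe_trunc (u x') (hfin x' hx'K) N]
  exact max_lt hx' h2

lemma sa_bound {n : ℕ} (K : Set (Euc n)) (hK : IsCompact K) (u : Euc n → EReal)
    (hu : UpperSemicontinuousOn u K) (hfin : ∀ x ∈ K, u x ≠ ⊤) :
    ∃ M : ℝ, 0 ≤ M ∧ ∀ x ∈ K, u x ≤ (M : EReal) := by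
  rcases K.eq_empty_or_nonempty with h | h
  · exact ⟨0, le_rfl, by simp [h]⟩
  obtain ⟨y, hy, hmax⟩ := hu.exists_isMaxOn h hK
  refine ⟨max (u y).toReal 0, le_max_right _ _, fun x hx => (hmax hx).trans ?_⟩
  exact (EReal.le_coe_toReal (hfin y hy)).trans (EReal.coe_le_coe_iff.2 (le_max_left _ _))

theorem subaffine_theorem {n : ℕ} (F : Set (SymMat n)) (hF : IsDirichletSet F)
    (X : Set (Euc n)) (hX : IsOpen X)
    (u : Euc n → EReal) (hu_usc : UpperSemicontinuousOn u X) (hu_fin : ∀ x ∈ X, u x ≠ ⊤)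
    (hu : IsTypeF F X u)
    (v : Euc n → EReal) (hv_usc : UpperSemicontinuousOn v X) (hv_fin : ∀ x ∈ X, v x ≠ ⊤)
    (hv : IsTypeF (dirDual F) X v) :
    SubaffineOn X (fun x => u x + v x) := by
  intro K hK hKX a hfr x1 hx1
  beta_reduce at hfr ⊢
  by_contra hcon
  rw [not_le] at hcon
  have huK := hu_usc.mono hKX
  have hvK := hv_usc.mono hKX
  have huf : ∀ x ∈ K, u x ≠ ⊤ := fun x hx => hu_fin x (hKX hx)
  have hvf : ∀ x ∈ K, v x ≠ ⊤ := fun x hx => hv_fin x (hKX hx)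
  have hac : Continuous a := a.continuous_of_finiteDimensional
  obtain ⟨M1, hM10, hM1⟩ := sa_bound K hK u huK huf
  obtain ⟨M2, hM20, hM2⟩ := sa_bound K hK v hvK hvf
  obtain ⟨Ma, hMa⟩ := hK.exists_bound_of_continuousOn hac.continuousOn
  obtain ⟨R0, hR0⟩ := hK.exists_bound_of_continuousOn
    (f := fun x : Euc n => ‖x‖ ^ 2) (by fun_prop)
  have hMa0 : 0 ≤ Ma := (norm_nonneg _).trans (hMa x1 hx1)
  have hR00 : 0 ≤ R0 := (norm_nonneg _).trans (hR0 x1 hx1)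
  have hR : ∀ x ∈ K, ‖x‖ ^ 2 ≤ R0 := fun x hx => (Real.le_norm_self _).trans (hR0 x hx)
  have hMa' : ∀ x ∈ K, -Ma ≤ a x := fun x hx => (abs_le.1 (hMa x hx)).1
  set N := Ma + M1 + M2 + 1 with hN
  set uN : Euc n → ℝ := fun x => (max (u x) ((-N : ℝ) : EReal)).toReal with huN
  set vN : Euc n → ℝ := fun x => (max (v x) ((-N : ℝ) : EReal)).toReal with hvN
  have cu : ∀ x ∈ K, (uN x : EReal) = max (u x) ((-N : ℝ) : EReal) := fun x hx =>
    sa_coe_trunc _ (huf x hx) N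
  have cv : ∀ x ∈ K, (vN x : EReal) = max (v x) ((-N : ℝ) : EReal) := fun x hx =>
    sa_coe_trunc _ (hvf x hx) N
  have uuN : ∀ x ∈ K, u x ≤ (uN x : EReal) := fun x hx => by rw [cu x hx]; exact le_max_left _ _
  have vvN : ∀ x ∈ K, v x ≤ (vN x : EReal) := fun x hx => by rw [cv x hx]; exact le_max_left _ _
  have uNM : ∀ x ∈ K, uN x ≤ M1 := fun x hx => by
    rw [← EReal.coe_le_coe_iff, cu x hx]
    exact max_le (hM1 x hx) (EReal.coe_le_coe_iff.2 (by linarith))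
  have vNM : ∀ x ∈ K, vN x ≤ M2 := fun x hx => by
    rw [← EReal.coe_le_coe_iff, cv x hx]
    exact max_le (hM2 x hx) (EReal.coe_le_coe_iff.2 (by linarith))
  have ueq : ∀ x ∈ K, -N < uN x → u x = (uN x : EReal) := fun x hx h => by
    rw [← EReal.coe_lt_coe_iff, cu x hx] at h
    rw [cu x hx]
    rcases lt_max_iff.1 h with h | h
    · exact (max_eq_left h.le).symm
    · exact absurd h (lt_irrefl _)
  have veq : ∀ x ∈ K, -N < vN x → v x = (vN x : EReal) := fun x hx h => by
    rw [← EReal.coe_lt_coe_iff, cv x hx] at h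
    rw [cv x hx]
    rcases lt_max_iff.1 h with h | h
    · exact (max_eq_left h.le).symm
    · exact absurd h (lt_irrefl _)
  set γ := uN x1 + vN x1 - a x1 with hγ
  have hγ0 : 0 < γ := by
    have : (a x1 : EReal) < ((uN x1 + vN x1 : ℝ) : EReal) := by
      rw [EReal.coe_add]
      exact hcon.trans_le (add_le_add (uuN x1 hx1) (vvN x1 hx1))
    have := EReal.coe_lt_coe_iff.1 this
    linarith
  set δ := γ / (4 * (R0 + 1)) with hδ
  have hδ0 : 0 < δ := by positivity
  have hδR : ∀ x ∈ K, δ * ‖x‖ ^ 2 ≤ γ / 4 := by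
    intro x hx
    calc δ * ‖x‖ ^ 2 ≤ δ * (R0 + 1) := by gcongr; linarith [hR x hx]
      _ = γ / 4 := by rw [hδ]; field_simp
  set f : Euc n → ℝ := fun x => uN x + (δ * ‖x‖ ^ 2 - a x) with hf
  have hfusc : UpperSemicontinuousOn f K :=
    (sa_trunc_usc K u huK huf N).add
      (ContinuousOn.upperSemicontinuousOn (f := fun x : Euc n => δ * ‖x‖ ^ 2 - a x)
        (by fun_prop))
  have hgusc : UpperSemicontinuousOn vN K := sa_trunc_usc K v hvK hvf N
  have hfront : ∀ x ∈ frontier K, f x + vN x < γ / 2 := by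
    intro x hx
    have hxK : x ∈ K := hK.isClosed.frontier_subset hx
    have h1 := hδR x hxK
    have h2 : uN x + vN x ≤ a x := by
      by_cases hu' : -N < uN x
      · by_cases hv' : -N < vN x
        · have := hfr x hx
          rw [ueq x hxK hu', veq x hxK hv', ← EReal.coe_add, EReal.coe_le_coe_iff] at this
          exact this
        · linarith [uNM x hxK, hMa' x hxK]
      · linarith [vNM x hxK, hMa' x hxK]
    simp only [hf]
    linarith
  have hx1' : γ / 2 < f x1 + vN x1 := by
    have : 0 ≤ δ * ‖x1‖ ^ 2 := by positivity
    simp only [hf]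
    linarith
  obtain ⟨y, hy, z, hz, hyz, P, Q, T, R, hTR, hfT, hgR⟩ :=
    sa_core K hK f vN hfusc hgusc (γ / 2) hfront x1 hx1 hx1'
  have hyK := interior_subset hy
  have hzK := interior_subset hz
  have hsum : -Ma < uN y + vN z := by
    have h1 := hδR y hyK
    have h2 := hMa' y hyK
    simp only [hf] at hyz
    linarith
  have hyu : u y = (uN y : EReal) := ueq y hyK (by linarith [vNM z hzK])
  have hzv : v z = (vN z : EReal) := veq z hzK (by linarith [uNM y hyK])
  obtain ⟨A, hA⟩ := sa_symMat T
  obtain ⟨B, hB⟩ := sa_symMat R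
  have hcoe : ((A + (-(2 * δ)) • symOne n : SymMat n) : Matrix (Fin n) (Fin n) ℝ)
      = (A : Matrix (Fin n) (Fin n) ℝ) + (-(2 * δ)) • (symOne n : Matrix (Fin n) (Fin n) ℝ) := rfl
  have hAF : A + (-(2 * δ)) • symOne n ∈ F := by
    refine sa_visc F hF.isClosed X K hKX u hu uN uuN y hy hyu _
      (innerSL ℝ P + a.linear.toContinuousLinearMap - (2 * δ) • innerSL ℝ y) ?_
    intro η hη
    obtain ⟨ρ, hρ, h⟩ := hfT η hη
    refine ⟨ρ, hρ, fun w hw => ?_⟩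
    have h1 := h w hw
    simp only [hf] at h1
    have h2 : a (y + w) = a.linear w + a y := by
      rw [add_comm]; exact a.map_vadd y w
    rw [hcoe, sa_bilin_add, sa_bilin_smul, sa_bilin_one, hA]
    rw [h2, norm_add_sq_real] at h1
    change _ ≤ _ + (⟪P, w⟫ + a.linear w - (2 * δ) * ⟪y, w⟫) + _ + _
    linarith
  have hdc : IsClosed (dirDual F) := by
    have : dirDual F = (fun A : SymMat n => -A) ⁻¹' (interior F)ᶜ := rfl
    rw [this]
    exact isOpen_interior.isClosed_compl.preimage continuous_neg
  have hBF : B ∈ dirDual F := by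
    refine sa_visc (dirDual F) hdc X K hKX v hv vN vvN z hz hzv _ (innerSL ℝ Q) ?_
    intro η hη
    obtain ⟨ρ, hρ, h⟩ := hgR η hη
    refine ⟨ρ, hρ, fun w hw => ?_⟩
    have h1 := h w hw
    rw [hB]
    exact h1
  refine hBF (sa_interior F hF _ (-B) hAF (2 * δ) (by positivity) fun w => ?_)
  have e : ((-B : SymMat n) : Matrix (Fin n) (Fin n) ℝ) = (-1 : ℝ) • (B : Matrix (Fin n) (Fin n) ℝ) := by
    rw [neg_one_smul]; rfl
  rw [e, hcoe, sa_bilin_add, sa_bilin_smul, sa_bilin_smul, sa_bilin_one, hA, hB]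
  linarith [hTR w]
end
end

section
/- For every Dirichlet set F ⊂ Sym²(ℝⁿ) there exists λ > 0 such that A + λI ∈ P̃ for every A ∈ F, i.e., A + λI is not negative definite for every A ∈ F. Consequently, for every open set X ⊂ ℝⁿ and every function u of type F on X, the function x ↦ u(x) + λ·½|x|² is subaffine on X and hence satisfies the maximum principle on every compact subset of X. -/
open Set Metric Filter MeasureTheory Asymptotics
open scoped Topology BigOperators RealInnerProductSpace

noncomputable section

theorem hess_quad {n : ℕ} (lam : ℝ) (x : Euc n) :
    hessMat (fun y : Euc n => lam * (1/2 * ‖y‖ ^ 2)) x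
      = lam • (1 : Matrix (Fin n) (Fin n) ℝ) := by
  have h1 : fderiv ℝ (fun y : Euc n => lam * (1/2 * ‖y‖ ^ 2))
      = fun y => (lam • (innerSL ℝ : Euc n →L[ℝ] Euc n →L[ℝ] ℝ)) y := by
    funext y
    have h := (((hasStrictFDerivAt_norm_sq y).hasFDerivAt).const_mul (1/2 : ℝ)).const_mul lam
    rw [h.fderiv]
    ext z
    simp
  ext i j
  simp only [hessMat]
  rw [iteratedFDeriv_two_apply, h1, ContinuousLinearMap.fderiv]
  change lam * (inner ℝ (EuclideanSpace.single i (1 : ℝ) : Euc n) (EuclideanSpace.single j (1 : ℝ)))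
    = lam * (1 : Matrix (Fin n) (Fin n) ℝ) i j
  rw [EuclideanSpace.inner_single_left]
  simp [Matrix.one_apply, Pi.single_apply]

theorem exists_lam {n : ℕ} (B : SymMat n) : ∃ lam : ℝ, 0 < lam ∧
    ((B : Matrix (Fin n) (Fin n) ℝ) + lam • (1 : Matrix (Fin n) (Fin n) ℝ)).PosSemidef := by
  have hB : (B : Matrix (Fin n) (Fin n) ℝ).IsHermitian := B.2
  set M := (B : Matrix (Fin n) (Fin n) ℝ) with hM
  refine ⟨1 + ∑ i, ∑ j, |M i j|, by positivity, ?_⟩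
  refine Matrix.PosSemidef.of_dotProduct_mulVec_nonneg ?_ ?_
  · refine hB.add ?_
    simp [Matrix.IsHermitian]
  · intro x
    have hs : ∀ i, x i ^ 2 ≤ ∑ k, x k ^ 2 := fun i =>
      Finset.single_le_sum (f := fun k => x k ^ 2) (fun k _ => sq_nonneg _) (Finset.mem_univ i)
    have hS : 0 ≤ ∑ k, x k ^ 2 := Finset.sum_nonneg fun k _ => sq_nonneg _
    have h1 : ∀ i j, -(|M i j| * ∑ k, x k ^ 2) ≤ x i * (M i j * x j) := by
      intro i j
      have h2 : |x i * x j| ≤ ∑ k, x k ^ 2 := by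
        rw [abs_le]; constructor <;> nlinarith [hs i, hs j, sq_nonneg (x i + x j), sq_nonneg (x i - x j)]
      have h3 : |x i * (M i j * x j)| ≤ |M i j| * ∑ k, x k ^ 2 := by
        rw [show x i * (M i j * x j) = M i j * (x i * x j) by ring, abs_mul]
        exact mul_le_mul_of_nonneg_left h2 (abs_nonneg _)
      exact (abs_le.mp h3).1
    have h4 : -((∑ i, ∑ j, |M i j|) * ∑ k, x k ^ 2) ≤ x ⬝ᵥ (M.mulVec x) := by
      generalize (∑ k, x k ^ 2) = S at h1
      simp only [dotProduct, Matrix.mulVec, Finset.mul_sum, Finset.sum_mul,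
        ← Finset.sum_neg_distrib]
      exact Finset.sum_le_sum fun i _ => Finset.sum_le_sum fun j _ => h1 i j
    have h5 : x ⬝ᵥ x = ∑ k, x k ^ 2 := by simp [dotProduct, sq]
    simp only [star_trivial, Matrix.add_mulVec, Matrix.smul_mulVec, Matrix.one_mulVec,
      dotProduct_add, dotProduct_smul, smul_eq_mul, h5]
    nlinarith

/-- Lemma 6.6: there is `λ > 0` with `F + λI ⊂ P̃`; hence
`u + λ·½|x|²` is subaffine, and so satisfies the maximum principle, for every `u` of
type `F`. -/
theorem exists_shift_into_subaffine {n : ℕ} (F : Set (SymMat n)) (hF : IsDirichletSet F) :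
    ∃ lam : ℝ, 0 < lam ∧
      (∀ A ∈ F, ¬ (-((A : Matrix (Fin n) (Fin n) ℝ)
          + lam • (1 : Matrix (Fin n) (Fin n) ℝ))).PosDef) ∧
      ∀ X : Set (Euc n), IsOpen X → ∀ u : Euc n → EReal,
        UpperSemicontinuousOn u X → (∀ x ∈ X, u x ≠ ⊤) → IsTypeF F X u →
          SubaffineOn X (fun x => u x + ((lam * (1/2 * ‖x‖ ^ 2) : ℝ) : EReal)) ∧
          ∀ K : Set (Euc n), IsCompact K → K ⊆ X →
            ⨆ x ∈ K, (u x + ((lam * (1/2 * ‖x‖ ^ 2) : ℝ) : EReal)) ≤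
              ⨆ x ∈ frontier K, (u x + ((lam * (1/2 * ‖x‖ ^ 2) : ℝ) : EReal)) := by
  obtain ⟨B, hB⟩ := (Set.ne_univ_iff_exists_notMem F).1 hF.ne_univ
  obtain ⟨lam, hlam, hpsd⟩ := exists_lam B
  refine ⟨lam, hlam, ?_, ?_⟩
  · intro A hA hneg
    apply hB
    have h := hF.add_psd A hA (B - A) (by
      have := hpsd.add hneg.posSemidef
      convert this using 1
      push_cast
      abel)
    simpa using h
  · intro X hX u hu hut hT
    have hsub : SubaffineOn X (fun x => u x + ((lam * (1/2 * ‖x‖ ^ 2) : ℝ) : EReal)) := by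
      refine hT (fun x => lam * (1/2 * ‖x‖ ^ 2)) ⟨?_, ?_⟩
      · exact (contDiff_const.mul (contDiff_const.mul (contDiff_norm_sq ℝ))).contDiffOn
      · intro x _
        refine ⟨lam • symOne n, ?_, ?_⟩
        · intro hmem
          apply hB
          have h := hF.add_psd _ (interior_subset hmem) (B + lam • symOne n) (by
            simpa [symOne] using hpsd)
          simpa using h
        · rw [hess_quad]
          simp [symOne]
    refine ⟨hsub, ?_⟩
    intro K hK hKX
    refine EReal.le_of_forall_lt_iff_le.1 fun c hc => ?_
    refine iSup₂_le fun x hx => ?_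
    have h := hsub K hK hKX (AffineMap.const ℝ (Euc n) c) (fun y hy => by
      refine le_trans ?_ hc.le
      exact le_iSup₂ (f := fun y (_ : y ∈ frontier K) =>
        u y + ((lam * (1/2 * ‖y‖ ^ 2) : ℝ) : EReal)) y hy) x hx
    simpa using h
end
end

section
/- Let X ⊂ ℝⁿ be open and u : X → ℝ locally quasiconvex. If for Lebesgue-almost every x ∈ X the function u is twice differentiable at x and its Hessian Hess_x u is not negative definite (has at least one eigenvalue ≥ 0), then u is subaffine on X. -/
open Set Metric Filter MeasureTheory Asymptotics
open scoped Topology BigOperators RealInnerProductSpace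

noncomputable section

/-- subgradient inequality at a contact point -/
lemma qc_subgrad {n : ℕ} (v : Euc n → ℝ) (lam : ℝ) (x0 : Euc n) (r : ℝ)
    (hc : ConvexOn ℝ (ball x0 r) (fun y => v y + lam * (1/2 * ‖y‖ ^ 2)))
    (x p : Euc n) (hx : x ∈ ball x0 r)
    (hp : ∀ y ∈ ball x0 r, v y ≤ v x + ⟪p, y - x⟫)
    (z : Euc n) (hz : z ∈ ball x0 r) :
    v x + ⟪p, z - x⟫ - lam / 2 * ‖z - x‖ ^ 2 ≤ v z := by
  have key : ∀ᶠ t in 𝓝[>] (0:ℝ), v x + ⟪p, z - x⟫ - lam / 2 * ‖z - x‖ ^ 2 ≤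
      v z + t * (lam / 2 * ‖z - x‖ ^ 2) := by
    have h1 : ∀ᶠ t in 𝓝[>] (0:ℝ), x - t • (z - x) ∈ ball x0 r := by
      apply eventually_nhdsWithin_of_eventually_nhds
      have : ContinuousAt (fun t : ℝ => x - t • (z - x)) 0 := by fun_prop
      apply this.eventually_mem
      apply isOpen_ball.mem_nhds
      simpa using hx
    filter_upwards [h1, self_mem_nhdsWithin] with t ht ht0
    have ht0 : 0 < t := ht0
    have hcv := hc.2 hz ht (show 0 ≤ t / (1 + t) by positivity)
      (show 0 ≤ 1 / (1 + t) by positivity) (by field_simp; ring)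
    have e : (t / (1 + t)) • z + (1 / (1 + t)) • (x - t • (z - x)) = x := by
      have : x = (1 / (1 + t) * (1 + t)) • x := by
        rw [one_div_mul_cancel (by positivity), one_smul]
      conv_rhs => rw [this]
      module
    rw [e] at hcv
    have hq := hp _ ht
    simp only [smul_eq_mul] at hcv
    have e2 : x - t • (z - x) - x = - (t • (z - x)) := by abel
    rw [e2, inner_neg_right, inner_smul_right] at hq
    have e3 : ‖x - t • (z - x)‖ ^ 2 = ‖x‖ ^ 2 - 2 * t * ⟪x, z - x⟫ + t ^ 2 * ‖z - x‖ ^ 2 := by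
      rw [norm_sub_sq_real, inner_smul_right, norm_smul, mul_pow]
      simp; ring
    have e4 : ‖z‖ ^ 2 = ‖x‖ ^ 2 + 2 * ⟪x, z - x⟫ + ‖z - x‖ ^ 2 := by
      rw [← norm_add_sq_real]; simp
    rw [e3, e4] at hcv
    have hcv2 : (v x + lam * (1/2 * ‖x‖ ^ 2)) * (1 + t) ≤
        t * (v z + lam * (1 / 2 * (‖x‖ ^ 2 + 2 * ⟪x, z - x⟫ + ‖z - x‖ ^ 2))) +
        (v (x - t • (z - x)) + lam * (1/2 * (‖x‖ ^ 2 - 2 * t * ⟪x, z - x⟫ + t ^ 2 * ‖z - x‖ ^ 2))) := by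
      have := mul_le_mul_of_nonneg_right hcv (show 0 ≤ 1 + t by positivity)
      refine this.trans (le_of_eq ?_)
      field_simp
    have : 0 ≤ t * (v z + t * (lam / 2 * ‖z - x‖ ^ 2) - 
      (v x + ⟪p, z - x⟫ - lam / 2 * ‖z - x‖ ^ 2)) := by
      nlinarith
    have := nonneg_of_mul_nonneg_right this ht0
    linarith
  have lim : Tendsto (fun t : ℝ => v z + t * (lam / 2 * ‖z - x‖ ^ 2)) (𝓝[>] 0) (𝓝 (v z)) := by
    have : ContinuousAt (fun t : ℝ => v z + t * (lam / 2 * ‖z - x‖ ^ 2)) 0 := by fun_prop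
    have := this.tendsto.mono_left (nhdsWithin_le_nhds (s := Ioi 0))
    simpa using this
  exact ge_of_tendsto lim key

lemma qc_lip {n : ℕ} (v : Euc n → ℝ) (lam : ℝ) (hlam : 0 < lam) (x0 : Euc n) (r : ℝ)
    (hc : ConvexOn ℝ (ball x0 r) (fun y => v y + lam * (1/2 * ‖y‖ ^ 2)))
    (x p x' p' : Euc n) (hx : x ∈ ball x0 (r/4)) (hx' : x' ∈ ball x0 (r/4))
    (hp : ∀ y ∈ ball x0 r, v y ≤ v x + ⟪p, y - x⟫)
    (hp' : ∀ y ∈ ball x0 r, v y ≤ v x' + ⟪p', y - x'⟫) :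
    ‖p - p'‖ ≤ 2 * lam * ‖x - x'‖ := by
  have hr : 0 < r := by
    have := pos_of_mem_ball hx; linarith
  have hsub : ball x0 (r/4) ⊆ ball x0 r := ball_subset_ball (by linarith)
  have hd : ‖x - x'‖ < r / 2 := by
    rw [← dist_eq_norm]
    have := dist_triangle_right x x' x0
    rw [mem_ball] at hx hx'
    linarith
  have key : ∀ d, ‖x - x'‖ < d → d < r / 2 → ‖p - p'‖ ≤ 2 * lam * d := by
    intro d hd1 hd2
    have hd0 : 0 < d := (norm_nonneg _).trans_lt hd1
    by_cases hQ : p - p' = 0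
    · rw [hQ, norm_zero]; positivity
    have hQ' : 0 < ‖p - p'‖ := norm_pos_iff.2 hQ
    set h : Euc n := (d / ‖p - p'‖) • (p - p') with hh
    have hn : ‖h‖ = d := by
      rw [hh, norm_smul, Real.norm_of_nonneg (by positivity)]; field_simp
    have hin : ⟪p - p', h⟫ = d * ‖p - p'‖ := by
      rw [hh, inner_smul_right, real_inner_self_eq_norm_sq]; field_simp
    have hmem : x' + h ∈ ball x0 r := by
      rw [mem_ball] at hx' ⊢
      have := dist_triangle (x' + h) x' x0
      have e : dist (x' + h) x' = d := by rw [dist_eq_norm]; simpa using hn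
      linarith
    have h1 := qc_subgrad v lam x0 r hc x p (hsub hx) hp _ hmem
    have h2 := hp' _ hmem
    have h3 := hp _ (hsub hx')
    have e1 : x' + h - x = (x' - x) + h := by abel
    have e2 : x' + h - x' = h := by abel
    rw [e1, inner_add_right] at h1
    rw [e2] at h2
    rw [inner_sub_left] at hin
    have h4 : ‖(x' - x) + h‖ ^ 2 ≤ (2 * d) ^ 2 := by
      gcongr
      have := norm_add_le (x' - x) h
      rw [norm_sub_rev] at hd1
      linarith
    have h5 : lam / 2 * ‖(x' - x) + h‖ ^ 2 ≤ lam / 2 * (2 * d) ^ 2 := by gcongr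
    have : d * ‖p - p'‖ ≤ d * (2 * lam * d) := by nlinarith
    exact le_of_mul_le_mul_left this hd0
  by_contra hcon
  push Not at hcon
  have : ∀ᶠ d in 𝓝[>] ‖x - x'‖, ‖p - p'‖ ≤ 2 * lam * d := by
    filter_upwards [self_mem_nhdsWithin, Ioo_mem_nhdsGT hd] with d h1 h2
    exact key d h1 h2.2
  have lim : Tendsto (fun d : ℝ => 2 * lam * d) (𝓝[>] ‖x - x'‖) (𝓝 (2 * lam * ‖x - x'‖)) :=
    (Continuous.tendsto (by fun_prop) _).mono_left nhdsWithin_le_nhds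
  exact absurd (ge_of_tendsto lim this) (not_le.2 hcon)

lemma lip_null {n : ℕ} (S : Set (Euc n)) (hS : volume S = 0) (f : Euc n → Euc n) (C : NNReal)
    (hf : LipschitzOnWith C f S) : volume (f '' S) = 0 := by
  have h1 : (volume : Measure (Euc n)) ≪ μH[Module.finrank ℝ (Euc n)] :=
    Measure.absolutelyContinuous_isAddHaarMeasure _ _
  have h2 : (μH[Module.finrank ℝ (Euc n)] : Measure (Euc n)) ≪ volume :=
    Measure.absolutelyContinuous_isAddHaarMeasure _ _
  apply h1
  have := hf.hausdorffMeasure_image_le (d := Module.finrank ℝ (Euc n)) (by positivity)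
  rw [h2 hS, mul_zero] at this
  exact le_antisymm this bot_le

lemma jensen {n : ℕ} (v : Euc n → ℝ) (lam : ℝ) (hlam : 0 < lam) (x0 p0 : Euc n) (r c : ℝ)
    (hr : 0 < r) (hc0 : 0 < c)
    (hc : ConvexOn ℝ (ball x0 r) (fun y => v y + lam * (1/2 * ‖y‖ ^ 2)))
    (hm : ∀ y ∈ ball x0 r, v y ≤ v x0 + ⟪p0, y - x0⟫ - c * ‖y - x0‖ ^ 2)
    (N : Set (Euc n)) (hN : volume N = 0) :
    ∃ x ∈ ball x0 r, x ∉ N ∧ ∃ p, ∀ᶠ y in 𝓝 x, v y ≤ v x + ⟪p, y - x⟫ := by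
  by_contra hcon
  push Not at hcon
  have hcont : ContinuousOn v (ball x0 r) := by
    have h1 := hc.continuousOn isOpen_ball
    have h2 : ContinuousOn (fun y : Euc n => lam * (1/2 * ‖y‖ ^ 2)) (ball x0 r) := by fun_prop
    exact (h1.sub h2).congr (fun y _ => by simp)
  set s := r / 2 with hs
  have hsub : ball x0 s ⊆ ball x0 r := ball_subset_ball (by linarith)
  have hsub' : closedBall x0 s ⊆ ball x0 r := closedBall_subset_ball (by linarith)
  let S : Set (Euc n) := {x | x ∈ ball x0 (s/4) ∧ ∃ p, ∀ y ∈ ball x0 s, v y ≤ v x + ⟪p, y - x⟫}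
  have hSN : S ⊆ N := by
    rintro x ⟨hx, p, hp⟩
    have hx' : x ∈ ball x0 s := ball_subset_ball (by linarith) hx
    by_contra hxN
    refine hcon x (hsub hx') hxN p ?_
    filter_upwards [isOpen_ball.mem_nhds hx'] with y hy using not_lt.2 (hp y hy)
  have hP : ∀ x, ∃ p, x ∈ S → ∀ y ∈ ball x0 s, v y ≤ v x + ⟪p, y - x⟫ := by
    intro x
    by_cases h : x ∈ S
    · obtain ⟨_, p, hp⟩ := h
      exact ⟨p, fun _ => hp⟩
    · exact ⟨0, fun h' => absurd h' h⟩
  choose P hP using hP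
  have hcs := hc.subset hsub (convex_ball x0 s)
  have hlip : LipschitzOnWith (2 * lam).toNNReal P S := by
    apply LipschitzOnWith.of_dist_le_mul
    intro x hx y hy
    rw [dist_eq_norm, dist_eq_norm, Real.coe_toNNReal _ (by positivity)]
    exact qc_lip v lam hlam x0 s hcs x _ y _ hx.1 hy.1 (hP x hx) (hP y hy)
  have hnull := lip_null S (measure_mono_null hSN hN) P _ hlip
  have hball : ball p0 (c * s / 4) ⊆ P '' S := by
    intro p hp
    obtain ⟨x, hx, hmax⟩ := (isCompact_closedBall x0 s).exists_isMaxOn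
      ⟨x0, mem_closedBall_self (by positivity)⟩
      (f := fun y => v y - ⟪p, y⟫) ((hcont.mono hsub').sub (by fun_prop))
    have hmax : ∀ y ∈ closedBall x0 s, v y - ⟪p, y⟫ ≤ v x - ⟪p, x⟫ := hmax
    have hx4 : x ∈ ball x0 (s/4) := by
      have h1 := hmax x0 (mem_closedBall_self (by positivity))
      have h2 := hm x (hsub' hx)
      have h3 : ⟪p0 - p, x - x0⟫ ≤ ‖p0 - p‖ * ‖x - x0‖ := real_inner_le_norm _ _
      rw [mem_ball, dist_eq_norm, norm_sub_rev] at hp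
      rw [mem_ball, dist_eq_norm]
      rw [inner_sub_left, inner_sub_right p] at h3
      by_contra h4
      push Not at h4
      have h5 : 0 < ‖x - x0‖ := by linarith
      have h6 : c * ‖x - x0‖ * ‖x - x0‖ ≤ ‖p0 - p‖ * ‖x - x0‖ := by nlinarith
      have h7 := le_of_mul_le_mul_right h6 h5
      nlinarith
    have hpc : ∀ y ∈ ball x0 s, v y ≤ v x + ⟪p, y - x⟫ := by
      intro y hy
      have := hmax y (ball_subset_closedBall hy)
      rw [inner_sub_right]; linarith
    have hxS : x ∈ S := ⟨hx4, p, hpc⟩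
    refine ⟨x, hxS, ?_⟩
    have := qc_lip v lam hlam x0 s hcs x _ x _ hx4 hx4 (hP x hxS) hpc
    rw [sub_self, norm_zero, mul_zero] at this
    exact sub_eq_zero.1 (norm_eq_zero.1 (le_antisymm this (norm_nonneg _)))
  have := measure_mono_null hball hnull
  exact (measure_ball_pos volume p0 (show 0 < c * s / 4 by positivity)).ne' this

lemma bilin_smul {n : ℕ} (A : Matrix (Fin n) (Fin n) ℝ) (t : ℝ) (h : Euc n) :
    bilin A (t • h) (t • h) = t ^ 2 * bilin A h h := by
  simp only [bilin, Finset.mul_sum, PiLp.smul_apply, smul_eq_mul]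
  refine Finset.sum_congr rfl fun i _ => Finset.sum_congr rfl fun j _ => ?_
  ring

lemma hess_contra {n : ℕ} (u : Euc n → ℝ) (x q : Euc n) (c : ℝ) (hc : 0 < c)
    (A : Matrix (Fin n) (Fin n) ℝ) (hA : A.IsSymm) (hT : TwiceDiffWithHessAt u x A)
    (hneg : ¬ (-A).PosDef)
    (hq : ∀ᶠ y in 𝓝 x, u y ≤ u x + ⟪q, y - x⟫ - c * ‖y - x‖ ^ 2) : False := by
  apply hneg
  apply Matrix.PosDef.of_dotProduct_mulVec_pos
  · rw [Matrix.IsHermitian, Matrix.conjTranspose_eq_transpose_of_trivial, Matrix.transpose_neg, hA]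
  intro z hz
  set h : Euc n := WithLp.toLp 2 z with hh
  have hh0 : h ≠ 0 := by
    intro h0; apply hz
    ext i
    have := congrArg (fun w : Euc n => w i) h0
    simpa [hh] using this
  have e : star z ⬝ᵥ ((-A).mulVec z) = - bilin A h h := by
    simp only [bilin, dotProduct, Matrix.mulVec, hh, Matrix.neg_apply, Finset.mul_sum, 
      ← Finset.sum_neg_distrib]
    refine Finset.sum_congr rfl fun i _ => Finset.sum_congr rfl fun j _ => ?_
    simp; ring
  rw [e]
  by_contra hb
  have hb : 0 ≤ bilin A h h := by linarith
  obtain ⟨p, hp⟩ := hT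
  have h1 := hp.def (show 0 < c / 2 by positivity)
  have hq' : ∀ᶠ k in 𝓝 (0 : Euc n), u (x + k) ≤ u x + ⟪q, k⟫ - c * ‖k‖ ^ 2 := by
    have : Tendsto (fun k : Euc n => x + k) (𝓝 0) (𝓝 x) := by
      have : Continuous (fun k : Euc n => x + k) := by fun_prop
      simpa using this.tendsto 0
    have := this.eventually hq
    simpa using this
  have h2 := h1.and hq'
  have t1 : Tendsto (fun t : ℝ => t • h) (𝓝[>] 0) (𝓝 0) := by
    have : Continuous (fun t : ℝ => t • h) := by fun_prop
    have := this.tendsto 0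
    rw [zero_smul] at this
    exact this.mono_left nhdsWithin_le_nhds
  have t2 : Tendsto (fun t : ℝ => (-t) • h) (𝓝[>] 0) (𝓝 0) := by
    have : Continuous (fun t : ℝ => (-t) • h) := by fun_prop
    have := this.tendsto 0
    rw [neg_zero, zero_smul] at this
    exact this.mono_left nhdsWithin_le_nhds
  obtain ⟨t, ⟨⟨a1, a2⟩, b1, b2⟩, ht⟩ :=
    (((t1.eventually h2).and (t2.eventually h2)).and self_mem_nhdsWithin).exists
  have ht : 0 < t := ht
  have hpos : 0 < t ^ 2 * ‖h‖ ^ 2 := by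
    have := norm_pos_iff.2 hh0
    positivity
  simp only [bilin_smul, inner_smul_right, norm_smul, mul_pow, Real.norm_eq_abs, sq_abs, abs_mul,
    abs_pow, abs_norm, neg_sq, abs_neg] at a1 a2 b1 b2
  have a3 := (abs_le.1 a1).1
  have b3 := (abs_le.1 b1).1
  have : 0 ≤ t ^ 2 * bilin A h h := by positivity
  have hpos2 := mul_pos hc hpos
  linarith

/-- Theorem 7.3: a locally quasiconvex function whose Hessian is
almost everywhere not negative definite is subaffine. -/
theorem quasiconvex_ae_subaffine {n : ℕ} (X : Set (Euc n)) (hX : IsOpen X)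
    (u : Euc n → ℝ) (lam : ℝ) (hlam : 0 < lam)
    (hq : ∀ x ∈ X, ∃ B, IsOpen B ∧ Convex ℝ B ∧ x ∈ B ∧ B ⊆ X ∧
        ConvexOn ℝ B (fun y => u y + lam * (1/2 * ‖y‖ ^ 2)))
    (hae : ∀ᵐ x ∂(volume : Measure (Euc n)), x ∈ X →
        ∃ A : Matrix (Fin n) (Fin n) ℝ, A.IsSymm ∧ TwiceDiffWithHessAt u x A ∧
          ¬ (-A).PosDef) :
    SubaffineOn X (fun x => (u x : EReal)) := by
  intro K hK hKX a hfr x1 hx1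
  have hcont : ContinuousOn u X := by
    intro x hx
    obtain ⟨B, hBo, hBc, hxB, hBX, hconv⟩ := hq x hx
    have h1 := hconv.continuousOn hBo
    have h2 : ContinuousOn (fun y : Euc n => lam * (1/2 * ‖y‖ ^ 2)) B := by fun_prop
    have h3 : ContinuousOn u B := (h1.sub h2).congr (fun y _ => by simp)
    exact (h3.continuousAt (hBo.mem_nhds hxB)).continuousWithinAt
  have hacont : Continuous a := a.continuous_of_finiteDimensional
  by_contra hcon
  have hcon : a x1 < u x1 := by
    exact EReal.coe_lt_coe_iff.1 (not_le.1 hcon)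
  have hfr : ∀ x ∈ frontier K, u x ≤ a x := fun x hx => EReal.coe_le_coe_iff.1 (hfr x hx)
  obtain ⟨M, hM⟩ := hK.isBounded.exists_norm_le
  have hM0 : 0 ≤ M := (norm_nonneg _).trans (hM x1 hx1)
  set δ := u x1 - a x1 with hδ
  have hδ0 : 0 < δ := by linarith
  set c := δ / (2 * (M ^ 2 + 1)) with hc
  have hc0 : 0 < c := by positivity
  have hcM : c * M ^ 2 < δ := by
    have : c * (2 * (M ^ 2 + 1)) = δ := by rw [hc]; field_simp
    nlinarith
  obtain ⟨x0, hx0, hmax⟩ := hK.exists_isMaxOn ⟨x1, hx1⟩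
    (f := fun y => u y - a y + c * ‖y‖ ^ 2)
    (((hcont.mono hKX).sub hacont.continuousOn).add (by fun_prop))
  have hmax : ∀ y ∈ K, u y - a y + c * ‖y‖ ^ 2 ≤ u x0 - a x0 + c * ‖x0‖ ^ 2 := hmax
  have hint : x0 ∈ interior K := by
    by_contra hni
    have hf : x0 ∈ frontier K := ⟨subset_closure hx0, hni⟩
    have h1 := hfr x0 hf
    have h2 := hmax x1 hx1
    have h3 : c * ‖x0‖ ^ 2 ≤ c * M ^ 2 := by gcongr; exact hM x0 hx0
    have h4 : 0 ≤ c * ‖x1‖ ^ 2 := by positivity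
    linarith
  obtain ⟨B, hBo, hBc, hxB, hBX, hconv⟩ := hq x0 (hKX hx0)
  obtain ⟨r, hr, hrs⟩ := Metric.isOpen_iff.1 (hBo.inter isOpen_interior) x0 ⟨hxB, hint⟩
  obtain ⟨pa, hpa⟩ : ∃ pa : Euc n, ∀ k, a.linear k = ⟪pa, k⟫ := by
    refine ⟨(InnerProductSpace.toDual ℝ (Euc n)).symm (LinearMap.toContinuousLinearMap a.linear), ?_⟩
    intro k
    rw [InnerProductSpace.toDual_symm_apply]
    rfl
  have hasub : ∀ y, a y = a x0 + ⟪pa, y - x0⟫ := by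
    intro y
    have := a.linearMap_vsub y x0
    rw [vsub_eq_sub, vsub_eq_sub, hpa] at this
    linarith
  have hns : ∀ x y : Euc n, ‖y‖ ^ 2 = ‖x‖ ^ 2 + 2 * ⟪x, y - x⟫ + ‖y - x‖ ^ 2 := by
    intro x y
    rw [← norm_add_sq_real]; simp
  have hconv' : ConvexOn ℝ (ball x0 r)
      (fun y => (u y + c / 2 * ‖y‖ ^ 2) + lam * (1/2 * ‖y‖ ^ 2)) := by
    have h1 := hconv.subset (hrs.trans inter_subset_left) (convex_ball x0 r)
    have h2 : ConvexOn ℝ (ball x0 r) (fun y : Euc n => c / 2 * ‖y‖ ^ 2) := by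
      have := (convexOn_norm (convex_ball x0 r)).pow (fun _ _ => norm_nonneg _) 2
      exact this.smul (show 0 ≤ c / 2 by positivity)
    refine (h1.add h2).congr ?_
    intro y _
    simp only [Pi.add_apply]
    ring
  obtain ⟨x, hx, hxN, p, hp⟩ := jensen (fun y => u y + c / 2 * ‖y‖ ^ 2) lam hlam x0
    (pa - c • x0) r (c / 2) hr (by positivity) hconv' (by
      intro y hy
      have h1 := hmax y (interior_subset (hrs hy).2)
      rw [hasub y] at h1
      rw [inner_sub_left, inner_smul_left]
      simp only [conj_trivial]
      have h2 := hns x0 y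
      rw [h2] at h1 ⊢
      linarith) _ hae
  have hxX : x ∈ X := hBX (hrs hx).1
  obtain ⟨A, hAs, hT, hneg⟩ := not_not.1 hxN hxX
  refine hess_contra u x (p - c • x) (c / 2) (by positivity) A hAs hT hneg ?_
  filter_upwards [hp] with y hy
  rw [inner_sub_left, inner_smul_left]
  simp only [conj_trivial]
  rw [hns x y] at hy
  linarith
end
end
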